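/- arXiv:2206.00072 — 3 statements merged into one kernel-verified Lean document; each statement's English description precedes it below -/
import Mathlib

section
/- Let F be a finite field with q elements and let M be an n×n matrix over F[x] with det(M) ≠ 0 and deg(det(M)) = t. Then for every integer k ≥ t, the number of matrices X in the orbit GL_n(F[x])·M = {gM : g ∈ GL_n(F[x])} all of whose entries have degree at most k equals #GL_n(F) · q^{(n-1)(nk−t)}, where #GL_n(F) is the number of invertible n×n matrices over F. -/
open Polynomial Matrix

/-!
Row reduction does not change the orbit and brings `M` to a form in which the leading coefficients
of the rows are linearly independent; the row degrees `e i` then add up to the degree of the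
determinant. No cancellation of leading terms is possible in `U * M`, so this product has degree at
most `k` exactly when the `i`-th column of `U` has degree at most `k - e i`. It remains to count
unimodular matrices with bounds `m i` on the degrees of their rows (after transposing).

Lowering the largest bound `m i = d + 1` by one divides the count by `q ^ (n - 1)`. Row reduce the
remaining `n - 1` rows. Their leading vectors are independent, and unimodularity forces the
coefficient vector of `X ^ (d + 1)` in row `i` into their span, so exactly one homogeneous
combination of degree `d + 1` of the reduced rows, out of `q ^ (n - 1)`, lowers the degree
of row `i` to at most `d`.
-/

section LeadingCoefficients

variable {R ι κ : Type*}

/-- The matrix of leading row coefficients of `A` relative to the row degrees `e`: its `(i, j)`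
entry is the coefficient of `X ^ e i` in `A i j`, which is zero when `A i j` has smaller degree. -/
def rowLeadingCoeff [Semiring R] (e : ι → ℕ) (A : Matrix ι κ R[X]) : Matrix ι κ R :=
  of fun i j => (A i j).coeff (e i)

/-- A polynomial matrix is row reduced with row degrees `e` if its `i`-th row has degree at most
`e i` and the leading coefficients of its rows are linearly independent. -/
structure IsRowReduced [Semiring R] (e : ι → ℕ) (A : Matrix ι κ R[X]) : Prop where
  natDegree_le : ∀ i j, (A i j).natDegree ≤ e i
  linearIndependent : LinearIndependent R (rowLeadingCoeff e A).row

lemma natDegree_C_mul_X_pow_add_le [Semiring R] {c : R} {d n : ℕ} (hc : c ≠ 0 → n ≤ d)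
    (h : C c * X ^ (d - n) ≠ 0) : (C c * X ^ (d - n)).natDegree + n ≤ d :=
  Nat.add_le_of_le_sub (hc fun hc0 => h (by rw [hc0, C_0, zero_mul])) (natDegree_C_mul_X_pow_le _ _)

section Semiring

variable [Semiring R] [Fintype ι] {e : ι → ℕ} {A : Matrix ι κ R[X]} {p : ι → R[X]} {d : ℕ}

lemma natDegree_vecMul_le (hA : ∀ i j, (A i j).natDegree ≤ e i)
    (hp : ∀ i, p i ≠ 0 → (p i).natDegree + e i ≤ d) (j : κ) : ((p ᵥ* A) j).natDegree ≤ d := by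
  refine natDegree_sum_le_of_forall_le _ _ fun i _ => ?_
  by_cases hpi : p i = 0
  · simp [hpi]
  · exact (natDegree_mul_le_of_le le_rfl (hA i j)).trans (hp i hpi)

lemma coeff_vecMul (hA : ∀ i j, (A i j).natDegree ≤ e i)
    (hp : ∀ i, p i ≠ 0 → (p i).natDegree + e i ≤ d) (j : κ) :
    ((p ᵥ* A) j).coeff d = ((fun i => (p i).coeff (d - e i)) ᵥ* rowLeadingCoeff e A) j := by
  simp only [vecMul, dotProduct, finsetSum_coeff, rowLeadingCoeff, of_apply]
  refine Finset.sum_congr rfl fun i _ => ?_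
  by_cases hpi : p i = 0
  · simp [hpi]
  · have hi := hp i hpi
    conv_lhs => rw [← Nat.sub_add_cancel (le_of_add_le_right hi)]
    exact coeff_mul_add_eq_of_natDegree_le (Nat.le_sub_of_add_le hi) (hA i j)

/-- The combination of the rows of `A` with coefficients `c i * X ^ (d - e i)`: each row, of degree
at most `e i`, is first raised to the common degree `d`. The subtraction is truncated, so this is
meaningful when `e i ≤ d` for all `i` with `c i ≠ 0`. -/
noncomputable def homogeneousCombination (e : ι → ℕ) (d : ℕ) (A : Matrix ι κ R[X]) (c : ι → R) :
    κ → R[X] :=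
  (fun i => C (c i) * X ^ (d - e i)) ᵥ* A

lemma natDegree_homogeneousCombination_le {c : ι → R} (hA : ∀ i j, (A i j).natDegree ≤ e i)
    (hc : ∀ i, c i ≠ 0 → e i ≤ d) (j : κ) : (homogeneousCombination e d A c j).natDegree ≤ d :=
  natDegree_vecMul_le hA (fun i => natDegree_C_mul_X_pow_add_le (hc i)) j

lemma coeff_homogeneousCombination {c : ι → R} (hA : ∀ i j, (A i j).natDegree ≤ e i)
    (hc : ∀ i, c i ≠ 0 → e i ≤ d) (j : κ) :
    (homogeneousCombination e d A c j).coeff d = (c ᵥ* rowLeadingCoeff e A) j := by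
  simp [homogeneousCombination, coeff_vecMul hA (fun i => natDegree_C_mul_X_pow_add_le (hc i))]

/-- The predictable degree property. -/
lemma IsRowReduced.natDegree_vecMul_le_iff (hA : IsRowReduced e A) :
    (∀ j, ((p ᵥ* A) j).natDegree ≤ d) ↔ ∀ i, p i ≠ 0 → (p i).natDegree + e i ≤ d := by
  classical
  refine ⟨fun h i hi => ?_, natDegree_vecMul_le hA.natDegree_le⟩
  obtain ⟨m, hm, hmax⟩ := Finset.exists_max_image ({i | p i ≠ 0} : Finset ι)
    (fun i => (p i).natDegree + e i) ⟨i, by simpa using hi⟩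
  simp only [Finset.mem_filter, Finset.mem_univ, true_and] at hm hmax
  refine (hmax i hi).trans (not_lt.1 fun hlt => ?_)
  have hcoeff : (fun i => (p i).coeff ((p m).natDegree + e m - e i)) = 0 := by
    refine vecMul_injective_iff.2 hA.linearIndependent (funext fun j => ?_)
    beta_reduce
    rw [← coeff_vecMul hA.natDegree_le hmax, zero_vecMul]
    exact coeff_eq_zero_of_natDegree_lt ((h j).trans_lt hlt)
  have hlead := congrFun hcoeff m
  simp only [Nat.add_sub_cancel, coeff_natDegree, Pi.zero_apply, leadingCoeff_eq_zero] at hlead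
  exact hm hlead

lemma IsRowReduced.natDegree_vecMul_le_iff_of_le (hA : IsRowReduced e A) (he : ∀ i, e i ≤ d) :
    (∀ j, ((p ᵥ* A) j).natDegree ≤ d) ↔ ∀ i, (p i).natDegree ≤ d - e i := by
  rw [hA.natDegree_vecMul_le_iff]
  refine forall_congr' fun i => ?_
  rw [Nat.le_sub_iff_add_le (he i)]
  refine ⟨fun h => ?_, fun h _ => h⟩
  by_cases hi : p i = 0
  · simpa [hi] using he i
  · exact h hi

end Semiring

section CommRing

variable [CommRing R] {e : ι → ℕ}

lemma coeff_prod_sum_of_natDegree_le {s : Finset ι} {f : ι → R[X]}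
    (h : ∀ i ∈ s, (f i).natDegree ≤ e i) :
    (∏ i ∈ s, f i).coeff (∑ i ∈ s, e i) = ∏ i ∈ s, (f i).coeff (e i) := by
  classical
  induction s using Finset.induction_on with
  | empty => simp
  | insert a s ha ih =>
    have hs := fun i hi => h i (Finset.mem_insert_of_mem hi)
    rw [Finset.prod_insert ha, Finset.sum_insert ha, Finset.prod_insert ha, ← ih hs]
    exact coeff_mul_add_eq_of_natDegree_le (h a (Finset.mem_insert_self a s))
      ((natDegree_prod_le s f).trans (Finset.sum_le_sum hs))

variable [Fintype ι] [DecidableEq ι] {A : Matrix ι ι R[X]}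

lemma natDegree_det_le_sum (h : ∀ i j, (A i j).natDegree ≤ e i) :
    A.det.natDegree ≤ ∑ i, e i := by
  rw [det_apply]
  refine natDegree_sum_le_of_forall_le _ _ fun σ _ => (natDegree_smul_le _ _).trans ?_
  rw [← Equiv.sum_comp σ e]
  exact (natDegree_prod_le _ _).trans (Finset.sum_le_sum fun i _ => h (σ i) i)

lemma coeff_det_sum (h : ∀ i j, (A i j).natDegree ≤ e i) :
    A.det.coeff (∑ i, e i) = (rowLeadingCoeff e A).det := by
  simp only [det_apply, finsetSum_coeff, coeff_smul]
  refine Finset.sum_congr rfl fun σ _ => ?_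
  rw [← Equiv.sum_comp σ e, coeff_prod_sum_of_natDegree_le fun i _ => h (σ i) i]
  rfl

lemma IsRowReduced.coeff_det_ne_zero [IsDomain R] (hA : IsRowReduced e A) :
    A.det.coeff (∑ i, e i) ≠ 0 := by
  rw [coeff_det_sum hA.natDegree_le]
  exact nonsingular_iff_det_ne_zero.1 (.of_linearIndependent_row hA.linearIndependent)

lemma IsRowReduced.det_ne_zero [IsDomain R] (hA : IsRowReduced e A) : A.det ≠ 0 := fun h =>
  hA.coeff_det_ne_zero (by rw [h, coeff_zero])

lemma IsRowReduced.natDegree_det [IsDomain R] (hA : IsRowReduced e A) :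
    A.det.natDegree = ∑ i, e i :=
  natDegree_eq_of_le_of_coeff_ne_zero (natDegree_det_le_sum hA.natDegree_le) hA.coeff_det_ne_zero

end CommRing

end LeadingCoefficients

section UnitsMul

variable {R ι κ : Type*} [CommRing R] [Fintype ι] [DecidableEq ι]

lemma det_one_updateRow (i : ι) (p : ι → R) :
    ((1 : Matrix ι ι R).updateRow i p).det = p i := by
  have h := det_updateRow_sum (1 : Matrix ι ι R) i p
  rw [det_one, smul_eq_mul, mul_one] at h
  rw [← h]
  congr 2
  ext j
  simp [Finset.sum_apply, one_apply]

lemma linearIndependent_row_units_mul {A : Matrix ι κ R} (hA : LinearIndependent R A.row)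
    (P : GL ι R) : LinearIndependent R ((P : Matrix ι ι R) * A).row := by
  rw [← vecMul_injective_iff] at hA ⊢
  have hcomp : ((P : Matrix ι ι R) * A).vecMul = A.vecMul ∘ (P : Matrix ι ι R).vecMul :=
    funext fun v => (vecMul_vecMul v _ A).symm
  rw [hcomp]
  exact hA.comp (vecMul_injective_of_isUnit P.isUnit)

lemma span_row_units_mul (P : GL ι R) (A : Matrix ι κ R) :
    Submodule.span R (Set.range ((P : Matrix ι ι R) * A).row) =
      Submodule.span R (Set.range A.row) := by
  simp only [← range_vecMulLinear]
  have hcomp : ((P : Matrix ι ι R) * A).vecMulLinear =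
      A.vecMulLinear ∘ₗ (P : Matrix ι ι R).vecMulLinear :=
    LinearMap.ext fun v => (vecMul_vecMul v _ A).symm
  rw [hcomp]
  exact LinearMap.range_comp_of_range_eq_top _
    (LinearMap.range_eq_top.2 (vecMul_surjective_iff_isUnit.2 P.isUnit))

lemma exists_eq_units_mul_units_mul_iff (g : GL ι R) {X A : Matrix ι κ R} :
    (∃ h : GL ι R, X = (h : Matrix ι ι R) * ((g : Matrix ι ι R) * A)) ↔
      ∃ h : GL ι R, X = (h : Matrix ι ι R) * A := by
  simp only [← Matrix.mul_assoc, ← Units.val_mul]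
  exact (Equiv.mulRight g).exists_congr_left.trans (by simp)

lemma natDegree_det_units_mul [IsDomain R] (g : GL ι R[X]) (A : Matrix ι ι R[X]) :
    ((g : Matrix ι ι R[X]) * A).det.natDegree = A.det.natDegree := by
  obtain ⟨c, hc, hdet⟩ := Polynomial.isUnit_iff.1 ((isUnit_iff_isUnit_det _).1 g.isUnit)
  rw [det_mul, ← hdet, natDegree_C_mul hc.ne_zero]

end UnitsMul

section RowReduction

variable {F ι κ : Type*} [Field F] [Fintype ι] {e : ι → ℕ} {A : Matrix ι κ F[X]}

lemma exists_isUnit_coeff_vecMul_eq_zero (hA : ∀ i j, (A i j).natDegree ≤ e i)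
    (hlead : ¬LinearIndependent F (rowLeadingCoeff e A).row) :
    ∃ i, ∃ p : ι → F[X], IsUnit (p i) ∧
      ∀ j, ((p ᵥ* A) j).natDegree ≤ e i ∧ ((p ᵥ* A) j).coeff (e i) = 0 := by
  classical
  rw [← vecMul_injective_iff, ← coe_vecMulLinear, injective_iff_map_eq_zero] at hlead
  push Not at hlead
  obtain ⟨c, hc, hc0⟩ := hlead
  obtain ⟨l, hl⟩ := Function.ne_iff.1 hc0
  obtain ⟨i, hi, hmax⟩ :=
    Finset.exists_max_image ({i | c i ≠ 0} : Finset ι) e ⟨l, by simpa using hl⟩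
  simp only [Finset.mem_filter, Finset.mem_univ, true_and] at hi hmax
  refine ⟨i, fun l => C (c l) * X ^ (e i - e l), by simpa using hi, fun j =>
    ⟨natDegree_homogeneousCombination_le hA hmax j, ?_⟩⟩
  exact (coeff_homogeneousCombination hA hmax j).trans (congrFun hc j)

lemma exists_natDegree_units_mul_le_lt [DecidableEq ι] (hA : ∀ i j, (A i j).natDegree ≤ e i)
    (hli : LinearIndependent F[X] A.row)
    (hlead : ¬LinearIndependent F (rowLeadingCoeff e A).row) :
    ∃ P : GL ι F[X], ∃ e' < e, ∀ i j, (((P : Matrix ι ι F[X]) * A) i j).natDegree ≤ e' i := by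
  obtain ⟨i, p, hpi, hp⟩ := exists_isUnit_coeff_vecMul_eq_zero hA hlead
  have hei : e i ≠ 0 := fun h0 => by
    have hpA : p ᵥ* A = 0 ᵥ* A := by
      ext1 j
      obtain ⟨hdeg, hcoeff⟩ := hp j
      rw [h0] at hdeg hcoeff
      rw [eq_C_of_natDegree_le_zero hdeg, hcoeff, C_0, zero_vecMul, Pi.zero_apply]
    exact hpi.ne_zero (congrFun (vecMul_injective_iff.2 hli hpA) i)
  refine ⟨GeneralLinearGroup.mk'' ((1 : Matrix ι ι F[X]).updateRow i p)
    (by rwa [det_one_updateRow]),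
    Function.update e i (e i - 1), update_lt_self_iff.2 (Nat.sub_one_lt hei), fun l j => ?_⟩
  change (((1 : Matrix ι ι F[X]).updateRow i p * A) l j).natDegree ≤ _
  rw [updateRow_mul, Matrix.one_mul]
  obtain rfl | hl := eq_or_ne l i
  · simpa using natDegree_le_pred (hp j).1 (hp j).2
  · simpa [hl] using hA l j

theorem exists_isRowReduced_units_mul [DecidableEq ι] (hA : ∀ i j, (A i j).natDegree ≤ e i)
    (hli : LinearIndependent F[X] A.row) :
    ∃ P : GL ι F[X], ∃ e' ≤ e, IsRowReduced e' ((P : Matrix ι ι F[X]) * A) := by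
  induction e using WellFoundedLT.induction generalizing A with
  | _ e ih =>
    by_cases hlead : LinearIndependent F (rowLeadingCoeff e A).row
    · exact ⟨1, e, le_rfl, by rw [Units.val_one, Matrix.one_mul]; exact ⟨hA, hlead⟩⟩
    · obtain ⟨Q, e₁, he₁, hQ⟩ := exists_natDegree_units_mul_le_lt hA hli hlead
      obtain ⟨P, e₂, he₂, hP⟩ := ih e₁ he₁ hQ (linearIndependent_row_units_mul hli Q)
      exact ⟨P * Q, e₂, he₂.trans he₁.le, by rwa [Units.val_mul, Matrix.mul_assoc]⟩

end RowReduction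

section Completion

variable {F ι κ : Type*} [Field F] [Finite κ] {e : ι → ℕ} {A : Matrix ι κ F[X]}
  {d : ℕ} {v : κ → F[X]}

-- Otherwise `v` together with the rows of `A` would form a row reduced generating family. By
-- predictable degree the constant vectors would not involve `v`, so `A` alone would generate.
lemma IsRowReduced.coeff_mem_span [Finite ι] (hA : IsRowReduced e A) (hd : 0 < d)
    (hv : ∀ j, (v j).natDegree ≤ d) (hmem : v ∉ Submodule.span F[X] (Set.range A.row))
    (hspan : Submodule.span F[X] (Set.range A.row) ⊔ Submodule.span F[X] {v} = ⊤) :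
    (fun j => (v j).coeff d) ∈ Submodule.span F (Set.range (rowLeadingCoeff e A).row) := by
  classical
  cases nonempty_fintype ι
  by_contra hlead
  let B : Matrix (Option ι) κ F[X] := of fun o => o.elim v A
  have hB : IsRowReduced (fun o => o.elim d e) B :=
    { natDegree_le := by rintro (_ | i) j; exacts [hv j, hA.natDegree_le i j]
      linearIndependent := linearIndependent_option.2 ⟨hA.linearIndependent, hlead⟩ }
  have hBspan : Submodule.span F[X] (Set.range B.row) = ⊤ := by
    rw [← hspan, sup_comm, ← Submodule.span_insert, ← Option.range_elim]
    rfl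
  have hconst : ∀ u : κ → F[X], (∀ j, (u j).natDegree ≤ 0) →
      u ∈ Submodule.span F[X] (Set.range A.row) := fun u hu => by
    obtain ⟨p, rfl⟩ : u ∈ LinearMap.range B.vecMulLinear := by
      rw [range_vecMulLinear, hBspan]; trivial
    have hp : p none = 0 := by
      by_contra h0
      exact (hd.trans_le (le_of_add_le_right (hB.natDegree_vecMul_le_iff.1 hu none h0))).false
    rw [← range_vecMulLinear]
    refine ⟨fun i => p (some i), funext fun j => ?_⟩
    simp only [vecMulLinear_apply, vecMul, dotProduct, Fintype.sum_option, hp, zero_mul, zero_add,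
      of_apply, B]
    rfl
  have hbasis : Set.range (Pi.basisFun F[X] κ) ⊆ Submodule.span F[X] (Set.range A.row) := by
    rintro _ ⟨i, rfl⟩
    refine hconst _ fun j => ?_
    rw [Pi.basisFun_apply, Pi.single_apply]
    split_ifs <;> simp
  exact hmem (Submodule.span_le.2 hbasis ((Pi.basisFun F[X] κ).mem_span v))

lemma IsRowReduced.existsUnique_natDegree_sub_le [Fintype ι] (hA : IsRowReduced e A)
    (he : ∀ i, e i ≤ d + 1) (hv : ∀ j, (v j).natDegree ≤ d + 1)
    (hmem : v ∉ Submodule.span F[X] (Set.range A.row))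
    (hspan : Submodule.span F[X] (Set.range A.row) ⊔ Submodule.span F[X] {v} = ⊤) :
    ∃! c, ∀ j, (v j - homogeneousCombination e (d + 1) A c j).natDegree ≤ d := by
  have hsub : ∀ c, (∀ j, (v j - homogeneousCombination e (d + 1) A c j).natDegree ≤ d) ↔
      c ᵥ* rowLeadingCoeff e A = fun j => (v j).coeff (d + 1) := fun c => by
    rw [funext_iff]
    refine forall_congr' fun j => ?_
    have hdeg := natDegree_homogeneousCombination_le (c := c) hA.natDegree_le (fun i _ => he i) j
    rw [← coeff_homogeneousCombination hA.natDegree_le (fun i _ => he i), eq_comm, ← sub_eq_zero,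
      ← coeff_sub]
    exact ⟨fun h => coeff_eq_zero_of_natDegree_lt (Nat.lt_succ_of_le h), fun h =>
      natDegree_le_pred ((natDegree_sub_le_of_le (hv j) hdeg).trans_eq (max_self _)) h⟩
  have hlead := hA.coeff_mem_span d.succ_pos hv hmem hspan
  rw [← range_vecMulLinear] at hlead
  obtain ⟨c, hc⟩ := hlead
  exact ⟨c, (hsub c).2 hc, fun b hb =>
    vecMul_injective_iff.2 hA.linearIndependent (((hsub b).1 hb).trans hc.symm)⟩

lemma exists_shift_existsUnique_natDegree_sub_le [Finite ι]
    (hA : ∀ i j, (A i j).natDegree ≤ d + 1) (hli : LinearIndependent F[X] A.row) :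
    ∃ τ : (ι → F) → κ → F[X],
      (∀ c, τ c ∈ Submodule.span F[X] (Set.range A.row) ∧ ∀ j, (τ c j).natDegree ≤ d + 1) ∧
      ∀ v : κ → F[X], (∀ j, (v j).natDegree ≤ d + 1) →
        v ∉ Submodule.span F[X] (Set.range A.row) →
        Submodule.span F[X] (Set.range A.row) ⊔ Submodule.span F[X] {v} = ⊤ →
        ∃! c, ∀ j, (v j - τ c j).natDegree ≤ d := by
  classical
  cases nonempty_fintype ι
  obtain ⟨P, e, he, hB⟩ := exists_isRowReduced_units_mul (e := fun _ => d + 1) hA hli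
  rw [← span_row_units_mul P A, ← range_vecMulLinear]
  refine ⟨homogeneousCombination e (d + 1) _, fun c => ⟨⟨_, rfl⟩, fun j =>
    natDegree_homogeneousCombination_le hB.natDegree_le (fun i _ => he i) j⟩, fun v => ?_⟩
  rw [range_vecMulLinear]
  exact hB.existsUnique_natDegree_sub_le he

end Completion

section RemoveRow

variable {R ι κ : Type*}

/-- The matrix `A` without its `i`-th row, the remaining rows keeping their original indices. -/
def removeRow (i : ι) (A : Matrix ι κ R) : Matrix {l // l ≠ i} κ R :=
  A.submatrix Subtype.val id

lemma removeRow_updateRow [DecidableEq ι] (i : ι) (A : Matrix ι κ R) (v : κ → R) :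
    removeRow i (A.updateRow i v) = removeRow i A := by
  ext l j
  simp [removeRow, l.2]

lemma eq_of_removeRow_eq {i : ι} {A B : Matrix ι κ R} (h : removeRow i A = removeRow i B)
    (hi : A i = B i) : A = B := by
  funext l
  by_cases hl : l = i
  · rw [hl, hi]
  · exact congrFun h ⟨l, hl⟩

lemma linearIndependent_removeRow [Semiring R] {A : Matrix ι κ R}
    (hA : LinearIndependent R A.row) (i : ι) : LinearIndependent R (removeRow i A).row :=
  hA.comp _ Subtype.val_injective

lemma span_removeRow_sup_span_singleton [Semiring R] (i : ι) (A : Matrix ι κ R) :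
    Submodule.span R (Set.range (removeRow i A).row) ⊔ Submodule.span R {A i} =
      Submodule.span R (Set.range A.row) := by
  rw [← Submodule.span_union]
  congr 1
  refine (Set.union_subset ?_ ?_).antisymm ?_
  · rintro _ ⟨l, rfl⟩
    exact ⟨l, rfl⟩
  · rintro _ rfl
    exact ⟨i, rfl⟩
  · rintro _ ⟨l, rfl⟩
    by_cases hl : l = i
    · exact .inr (congrArg A hl)
    · exact .inl ⟨⟨l, hl⟩, rfl⟩

variable [CommRing R] [Fintype ι] [DecidableEq ι] {i : ι} {A : Matrix ι ι R} {w : ι → R}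

lemma det_updateRow_eq_zero_of_mem_span
    (hw : w ∈ Submodule.span R (Set.range (removeRow i A).row)) : (A.updateRow i w).det = 0 := by
  have hle : Submodule.span R (Set.range (removeRow i A).row) ≤
      LinearMap.ker (LinearMap.proj i ∘ₗ cramer Aᵀ) := by
    rw [Submodule.span_le]
    rintro _ ⟨l, rfl⟩
    exact (cramer_transpose_apply A (A l) i).trans (det_updateRow_eq_zero l.2)
  simpa [cramer_transpose_apply] using hle hw

lemma det_updateRow_add_of_mem_span
    (hw : w ∈ Submodule.span R (Set.range (removeRow i A).row)) (v : ι → R) :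
    (A.updateRow i (v + w)).det = (A.updateRow i v).det := by
  rw [det_updateRow_add, det_updateRow_eq_zero_of_mem_span hw, add_zero]

lemma notMem_span_removeRow (hA : A.det ≠ 0) :
    A i ∉ Submodule.span R (Set.range (removeRow i A).row) := fun h =>
  hA (by simpa using det_updateRow_eq_zero_of_mem_span h)

lemma span_removeRow_sup_span_singleton_eq_top (hA : IsUnit A.det) (i : ι) :
    Submodule.span R (Set.range (removeRow i A).row) ⊔ Submodule.span R {A i} = ⊤ := by
  rw [span_removeRow_sup_span_singleton, ← range_vecMulLinear, LinearMap.range_eq_top]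
  exact vecMul_surjective_iff_isUnit.2 ((isUnit_iff_isUnit_det A).2 hA)

end RemoveRow

section Unimodular

variable {R ι : Type*} [CommRing R] [Fintype ι] [DecidableEq ι]

/-- The unimodular polynomial matrices whose `i`-th row has degree at most `m i`. Their transposes
are the multipliers `U` for which `U * A` has degree at most `k`, when `A` is row reduced with row
degrees `k - m i`. -/
def unimodularRowDegreeLE (R : Type*) [CommRing R] (m : ι → ℕ) : Set (Matrix ι ι R[X]) :=
  {A | IsUnit A.det ∧ ∀ i j, (A i j).natDegree ≤ m i}

lemma card_unimodularRowDegreeLE_zero :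
    Nat.card (unimodularRowDegreeLE R (0 : ι → ℕ)) = Nat.card (GL ι R) := by
  have hrange : unimodularRowDegreeLE R (0 : ι → ℕ) =
      Set.range fun g : GL ι R => (g : Matrix ι ι R).map C := by
    ext A
    refine ⟨fun hA => ?_, ?_⟩
    · obtain ⟨B, rfl⟩ : ∃ B : Matrix ι ι R, B.map C = A :=
        ⟨A.map (coeff · 0), ext fun i j => (eq_C_of_natDegree_le_zero (hA.2 i j)).symm⟩
      have hdet := hA.1
      rw [← RingHom.mapMatrix_apply, ← RingHom.map_det, isUnit_C] at hdet
      exact ⟨GeneralLinearGroup.mk'' B hdet, rfl⟩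
    · rintro ⟨g, rfl⟩
      refine ⟨?_, fun i j => (natDegree_C _).le⟩
      beta_reduce
      rw [← RingHom.mapMatrix_apply, ← RingHom.map_det, isUnit_C]
      exact (isUnit_iff_isUnit_det _).1 g.isUnit
  rw [hrange]
  exact Nat.card_range_of_injective ((map_injective C_injective).comp Units.val_injective)

variable {m : ι → ℕ} {i : ι} {d : ℕ}

lemma updateRow_add_mem_unimodularRowDegreeLE_iff {A : Matrix ι ι R[X]} {w : ι → R[X]}
    (hA : A ∈ unimodularRowDegreeLE R m)
    (hw : w ∈ Submodule.span R[X] (Set.range (removeRow i A).row)) :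
    A.updateRow i (A i + w) ∈ unimodularRowDegreeLE R (Function.update m i d) ↔
      ∀ j, ((A i + w) j).natDegree ≤ d := by
  have hdet : IsUnit (A.updateRow i (A i + w)).det := by
    rw [det_updateRow_add_of_mem_span hw, updateRow_eq_self]
    exact hA.1
  refine ⟨fun h j => by simpa using h.2 i j, fun h => ⟨hdet, fun l j => ?_⟩⟩
  obtain rfl | hl := eq_or_ne l i
  · simpa using h j
  · simpa [hl] using hA.2 l j

variable {F : Type*} [Field F]

lemma exists_shift_removeRow (i : ι) (hm : ∀ l, m l ≤ d + 1) :
    ∃ τ : Matrix {l // l ≠ i} ι F[X] → ({l // l ≠ i} → F) → ι → F[X],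
      ∀ A ∈ unimodularRowDegreeLE F m,
        (∀ c, τ (removeRow i A) c ∈ Submodule.span F[X] (Set.range (removeRow i A).row) ∧
          ∀ j, (τ (removeRow i A) c j).natDegree ≤ d + 1) ∧
        ∃! c, ∀ j, (A i j - τ (removeRow i A) c j).natDegree ≤ d := by
  choose! τ hτ hunique using fun (B : Matrix {l // l ≠ i} ι F[X])
    (hB : (∀ l j, (B l j).natDegree ≤ d + 1) ∧ LinearIndependent F[X] B.row) =>
      exists_shift_existsUnique_natDegree_sub_le hB.1 hB.2
  refine ⟨τ, fun A hA => ?_⟩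
  have hdeg : ∀ l j, (A l j).natDegree ≤ d + 1 := fun l j => (hA.2 l j).trans (hm l)
  have hremove := And.intro (fun (l : {l // l ≠ i}) j => hdeg l j)
    (linearIndependent_removeRow (linearIndependent_rows_of_det_ne_zero hA.1.ne_zero) i)
  exact ⟨hτ _ hremove, hunique _ hremove (A i) (hdeg i) (notMem_span_removeRow hA.1.ne_zero)
    (span_removeRow_sup_span_singleton_eq_top hA.1 i)⟩

lemma exists_equiv_unimodularRowDegreeLE (hi : m i = d + 1) (hmax : ∀ l, m l ≤ m i) :
    Nonempty (({l // l ≠ i} → F) × unimodularRowDegreeLE F (Function.update m i d) ≃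
      unimodularRowDegreeLE F m) := by
  obtain ⟨τ, hτ⟩ := exists_shift_removeRow (F := F) i fun l => (hmax l).trans_eq hi
  have hsub : unimodularRowDegreeLE F (Function.update m i d) ⊆ unimodularRowDegreeLE F m :=
    fun A hA => ⟨hA.1, fun l j =>
      (hA.2 l j).trans (update_le_self_iff.2 (hi ▸ d.le_succ : d ≤ m i) l)⟩
  have hmaps : ∀ c, ∀ A ∈ unimodularRowDegreeLE F (Function.update m i d),
      A.updateRow i (A i + τ (removeRow i A) c) ∈ unimodularRowDegreeLE F m := fun c A hA => by
    obtain ⟨hspan, hdeg⟩ := (hτ A (hsub hA)).1 c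
    rw [← Function.update_eq_self i m, hi]
    exact (updateRow_add_mem_unimodularRowDegreeLE_iff (hsub hA) hspan).2 fun j =>
      natDegree_add_le_of_degree_le (((hsub hA).2 i j).trans_eq hi) (hdeg j)
  refine ⟨Equiv.ofBijective (fun x => ⟨_, hmaps x.1 x.2 x.2.2⟩) ⟨?_, ?_⟩⟩
  · rintro ⟨c, A, hA⟩ ⟨c', A', hA'⟩ h
    have hB : A.updateRow i (A i + τ (removeRow i A) c) =
      A'.updateRow i (A' i + τ (removeRow i A') c') := congrArg Subtype.val h
    have hrem : removeRow i A = removeRow i A' := by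
      simpa only [removeRow_updateRow] using congrArg (removeRow i) hB
    have hrow : A i + τ (removeRow i A) c = A' i + τ (removeRow i A) c' := by
      simpa only [updateRow_self, hrem] using congrFun hB i
    have hcc' : c = c' := (hτ _ (hmaps c A hA)).2.unique
      (fun j => by simpa [removeRow_updateRow] using hA.2 i j)
      (fun j => by simpa [removeRow_updateRow, hrow] using hA'.2 i j)
    subst hcc'
    obtain rfl := eq_of_removeRow_eq hrem (add_right_cancel hrow)
    rfl
  · rintro ⟨A, hA⟩
    obtain ⟨hspan, c, hc, -⟩ := hτ A hA
    refine ⟨(c, ⟨A.updateRow i (A i + -τ (removeRow i A) c),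
      (updateRow_add_mem_unimodularRowDegreeLE_iff hA (neg_mem (hspan c).1)).2 fun j => by
          simpa only [Pi.add_apply, Pi.neg_apply, ← sub_eq_add_neg] using hc j⟩), Subtype.ext ?_⟩
    simp [removeRow_updateRow]

lemma card_unimodularRowDegreeLE [Fintype F] (m : ι → ℕ) :
    Nat.card (unimodularRowDegreeLE F m) =
      Nat.card (GL ι F) * Fintype.card F ^ ((Fintype.card ι - 1) * ∑ i, m i) := by
  induction hN : ∑ i, m i generalizing m with
  | zero =>
    obtain rfl : m = 0 := funext (by simpa using hN)
    rw [card_unimodularRowDegreeLE_zero, mul_zero, pow_zero, mul_one]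
  | succ N ih =>
    obtain ⟨l, -, hl⟩ := Finset.exists_ne_zero_of_sum_ne_zero (hN.trans_ne N.succ_ne_zero)
    obtain ⟨i, -, hmax⟩ := Finset.exists_max_image Finset.univ m ⟨l, Finset.mem_univ l⟩
    obtain ⟨d, hd⟩ := Nat.exists_eq_add_one_of_ne_zero
      ((Nat.pos_of_ne_zero hl).trans_le (hmax l (Finset.mem_univ l))).ne'
    obtain ⟨Φ⟩ := exists_equiv_unimodularRowDegreeLE (F := F) hd fun l =>
      hmax l (Finset.mem_univ l)
    have hsum : ∑ l, Function.update m i d l = N := by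
      rw [Finset.sum_update_of_mem (Finset.mem_univ i)]
      rw [Finset.sum_eq_add_sum_sdiff_singleton_of_mem (Finset.mem_univ i)] at hN
      lia
    have hfun : Nat.card ({l // l ≠ i} → F) = Fintype.card F ^ (Fintype.card ι - 1) := by
      simp [Nat.card_eq_fintype_card]
    rw [← Nat.card_congr Φ, Nat.card_prod, ih _ hsum, hfun]
    ring

end Unimodular

section Orbit

variable {ι : Type*} [Fintype ι] [DecidableEq ι] {e : ι → ℕ} {k : ℕ}

lemma IsRowReduced.setOf_orbit_natDegree_le_eq_image {R : Type*} [CommRing R]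
    {A : Matrix ι ι R[X]} (hA : IsRowReduced e A) (he : ∀ i, e i ≤ k) :
    {X | (∃ g : GL ι R[X], X = (g : Matrix ι ι R[X]) * A) ∧ ∀ i j, (X i j).natDegree ≤ k} =
      (fun U => Uᵀ * A) '' unimodularRowDegreeLE R fun i => k - e i := by
  have hdeg : ∀ U : Matrix ι ι R[X], (∀ i j, ((U * A) i j).natDegree ≤ k) ↔
      ∀ i j, (Uᵀ i j).natDegree ≤ k - e i := fun U =>
    (forall_congr' fun i => hA.natDegree_vecMul_le_iff_of_le (p := U i) he).trans forall_comm
  ext X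
  constructor
  · rintro ⟨⟨g, rfl⟩, hX⟩
    refine ⟨(g : Matrix ι ι R[X])ᵀ, ⟨?_, (hdeg _).1 hX⟩, congrArg (· * A) (transpose_transpose _)⟩
    rw [det_transpose]
    exact (isUnit_iff_isUnit_det _).1 g.isUnit
  · rintro ⟨U, ⟨hU, hUdeg⟩, rfl⟩
    rw [← det_transpose] at hU
    exact ⟨⟨GeneralLinearGroup.mk'' Uᵀ hU, rfl⟩, (hdeg _).2 hUdeg⟩

variable {F : Type*} [Field F]

theorem IsRowReduced.ncard_orbit_natDegree_le [Fintype F] {A : Matrix ι ι F[X]}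
    (hA : IsRowReduced e A) (he : ∀ i, e i ≤ k) :
    {X | (∃ g : GL ι F[X], X = (g : Matrix ι ι F[X]) * A) ∧ ∀ i j, (X i j).natDegree ≤ k}.ncard =
      Nat.card (GL ι F) *
        Fintype.card F ^ ((Fintype.card ι - 1) * (Fintype.card ι * k - A.det.natDegree)) := by
  have hinj : Function.Injective fun U : Matrix ι ι F[X] => Uᵀ * A :=
    (isRightRegular_iff_nonsingular.2 (nonsingular_iff_det_ne_zero.2 hA.det_ne_zero)).comp
      transpose_injective
  have hsum : ∑ i, (k - e i) = Fintype.card ι * k - A.det.natDegree := by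
    rw [hA.natDegree_det, Finset.sum_tsub_distrib _ fun i _ => he i, Finset.sum_const,
      Finset.card_univ, smul_eq_mul]
  rw [hA.setOf_orbit_natDegree_le_eq_image he, Set.ncard_image_of_injective _ hinj,
    ← Nat.card_coe_set_eq, card_unimodularRowDegreeLE, hsum]

lemma exists_units_mul_degree_le {M : Matrix ι ι F[X]} (hdet : M.det ≠ 0)
    (hk : M.det.natDegree ≤ k) :
    ∃ g : GL ι F[X], ∀ i j, (((g : Matrix ι ι F[X]) * M) i j).degree ≤ k := by
  obtain ⟨P, e, -, hP⟩ := exists_isRowReduced_units_mul (A := M)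
    (e := fun i => Finset.univ.sup fun j => (M i j).natDegree)
    (fun i j => Finset.le_sup (f := fun j => (M i j).natDegree) (Finset.mem_univ j))
    (linearIndependent_rows_of_det_ne_zero hdet)
  refine ⟨P, fun i j => natDegree_le_iff_degree_le.1 ((hP.natDegree_le i j).trans ?_)⟩
  calc e i ≤ ∑ l, e l := Finset.single_le_sum_of_canonicallyOrdered (Finset.mem_univ i)
    _ = M.det.natDegree := by rw [← hP.natDegree_det, natDegree_det_units_mul]
    _ ≤ k := hk

end Orbit

theorem stmt_0_general {F ι : Type*} [Field F] [Fintype F] [Fintype ι] [DecidableEq ι]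
    {M : Matrix ι ι F[X]} (hdet : M.det ≠ 0) {k : ℕ}
    (hk : ∃ g : GL ι F[X], ∀ i j, (((g : Matrix ι ι F[X]) * M) i j).degree ≤ k) :
    {X | (∃ g : GL ι F[X], X = (g : Matrix ι ι F[X]) * M) ∧ ∀ i j, (X i j).degree ≤ k}.ncard =
      Nat.card (GL ι F) *
        Fintype.card F ^ ((Fintype.card ι - 1) * (Fintype.card ι * k - M.det.natDegree)) := by
  simp only [← natDegree_le_iff_degree_le] at hk ⊢
  obtain ⟨g, hg⟩ := hk
  obtain ⟨P, e, he, hP⟩ := exists_isRowReduced_units_mul (e := fun _ => k) hg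
    (linearIndependent_row_units_mul (linearIndependent_rows_of_det_ne_zero hdet) g)
  have hcount := hP.ncard_orbit_natDegree_le he
  simpa only [exists_eq_units_mul_units_mul_iff, natDegree_det_units_mul] using hcount

/-- Let `F` be a finite field with `q` elements and `M` an `n × n` matrix
over `F[x]` with nonzero determinant of degree `t`.  For every `k ≥ t`, the number of matrices
in the orbit `GL_n(F[x])·M` all of whose entries have degree at most `k` equals
`#GL_n(F) · q^((n-1)(nk - t))`. -/
theorem stmt_0 (F : Type*) [Field F] [Fintype F] (q : ℕ) (hq : Fintype.card F = q)
    (n t : ℕ) (M : Matrix (Fin n) (Fin n) F[X])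
    (hdet : M.det ≠ 0) (ht : M.det.natDegree = t)
    (k : ℕ) (hk : t ≤ k) :
    {X : Matrix (Fin n) (Fin n) F[X] |
        (∃ g : GL (Fin n) F[X], X = (g : Matrix (Fin n) (Fin n) F[X]) * M) ∧
        ∀ i j, (X i j).degree ≤ (k : ℕ)}.ncard
      = Nat.card (GL (Fin n) F) * q ^ ((n - 1) * (n * k - t)) := by
  subst hq ht
  simpa only [Fintype.card_fin] using stmt_0_general hdet (exists_units_mul_degree_le hdet hk)
end

section
/- Let F be a finite field with q elements and let t ≥ 0, n ≥ 1. For every integer k ≥ t, the number of n×n matrices X over F[x] with det(X) ≠ 0, deg(det(X)) = t, and all entries of degree at most k equals c_{n,t} · #GL_n(F) · q^{(n-1)(nk−t)}, where c_{n,t} = Σ_{t_1+t_2+⋯+t_n = t, t_i ≥ 0} q^{t_1 + 2t_2 + ⋯ + n t_n} and #GL_n(F) is the number of invertible n×n matrices over F. -/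
open Polynomial Matrix

/-!
Every nonsingular `X` factors uniquely as `X = H * U` with `H` in Hermite normal form and `U`
unimodular. The diagonal degrees `t₁, …, tₙ` of `H` add up to the degree of the determinant, and
row `i` has `i` entries at or left of the diagonal, each with `tᵢ` free coefficients: this gives
`c_{n,t}`.

For fixed `H`, choose a unimodular `V` such that the leading columns of `H * V` are linearly
independent, and let `d` be its column degrees, so that `∑ j, d j = t`. Since no cancellation of
leading terms occurs, `H * U` has degree at most `k` if and only if row `j` of `V⁻¹ * U` has degree
at most `k - d j`. Transposing, it remains to count the unimodular matrices with column degrees at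
most `e`: there are `#GL_n(F) * q ^ ((n - 1) * ∑ j, e j)`. More generally, count those whose
leading columns with index in a set `J` are independent. Enlarging `J` by a column of maximal
degree bound discards the matrices whose new leading column depends on the others, and a column
operation turns these into matrices with a smaller bound `e`. When `J` contains all columns nothing
is left unless `e = 0`, because a unimodular matrix has constant determinant; this determines all
the counts.
-/

namespace PolyMatrix

section Leading

variable {R κ ι : Type*} [CommRing R]

/-- The `j`-th column of `M` has degree at most `d j`. -/
def ColDegreeLE (d : ι → ℕ) (M : Matrix κ ι R[X]) : Prop :=
  ∀ i j, (M i j).natDegree ≤ d j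

/-- The leading column coefficient matrix of `M` relative to column degree bounds `d`. -/
def colLead (d : ι → ℕ) (M : Matrix κ ι R[X]) : Matrix κ ι R :=
  of fun i j => (M i j).coeff (d j)

theorem colDegreeLE_update_iff [DecidableEq ι] {d : ι → ℕ} {j : ι} (hj : 0 < d j)
    {M : Matrix κ ι R[X]} :
    ColDegreeLE (Function.update d j (d j - 1)) M ↔
      ColDegreeLE d M ∧ (colLead d M).col j = 0 := by
  constructor
  · intro hM
    have hMj : ∀ i, (M i j).natDegree < d j := fun i => by
      have hij := hM i j
      rw [Function.update_self] at hij
      lia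
    refine ⟨fun i k => (hM i k).trans ?_, funext fun i => coeff_eq_zero_of_natDegree_lt (hMj i)⟩
    exact update_le_self_iff.mpr (Nat.sub_le _ _) k
  · rintro ⟨hM, hlead⟩ i k
    rcases eq_or_ne k j with rfl | hk
    · rw [Function.update_self]
      exact natDegree_le_pred (hM i k) (congrFun hlead i)
    · rw [Function.update_of_ne hk]
      exact hM i k

/-- The coefficients `c k * X ^ (N - d k)` of the combination of columns which brings them all to
the common degree `N`, so that its leading coefficients are combined with coefficients `c`. -/
noncomputable def align (d : ι → ℕ) (N : ℕ) (c : ι → R) : ι → R[X] :=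
  fun k => monomial (N - d k) (c k)

theorem add_natDegree_align_le {d : ι → ℕ} {N : ℕ} {c : ι → R}
    (hc : ∀ k, c k ≠ 0 → d k ≤ N) (k : ι) (hk : align d N c k ≠ 0) :
    d k + (align d N c k).natDegree ≤ N := by
  have hd : d k ≤ N := hc k fun h0 => hk (by simp [align, h0])
  exact (Nat.add_le_add_left (natDegree_monomial_le _) _).trans_eq (Nat.add_sub_cancel' hd)

theorem coeff_prod_sum_of_natDegree_le (s : Finset ι) (f : ι → R[X]) (d : ι → ℕ)
    (hf : ∀ i ∈ s, (f i).natDegree ≤ d i) :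
    (∏ i ∈ s, f i).coeff (∑ i ∈ s, d i) = ∏ i ∈ s, (f i).coeff (d i) := by
  classical
  induction s using Finset.induction_on with
  | empty => simp
  | insert a s ha ih =>
    have hs : ∀ i ∈ s, (f i).natDegree ≤ d i := fun i hi => hf i (Finset.mem_insert_of_mem hi)
    rw [Finset.prod_insert ha, Finset.sum_insert ha, Finset.prod_insert ha,
      coeff_mul_add_eq_of_natDegree_le (hf a (Finset.mem_insert_self a s))
        ((natDegree_prod_le s f).trans (Finset.sum_le_sum hs)), ih hs]

variable [Fintype ι] {d : ι → ℕ}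

theorem ColDegreeLE.natDegree_det_le [DecidableEq ι] {M : Matrix ι ι R[X]}
    (hM : ColDegreeLE d M) : M.det.natDegree ≤ ∑ j, d j := by
  rw [det_apply]
  refine natDegree_sum_le_of_forall_le _ _ fun σ _ => (natDegree_smul_le _ _).trans ?_
  exact (natDegree_prod_le _ _).trans (Finset.sum_le_sum fun j _ => hM (σ j) j)

theorem ColDegreeLE.coeff_det [DecidableEq ι] {M : Matrix ι ι R[X]} (hM : ColDegreeLE d M) :
    M.det.coeff (∑ j, d j) = (colLead d M).det := by
  simp only [det_apply, finsetSum_coeff, coeff_smul]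
  refine Finset.sum_congr rfl fun σ _ => ?_
  rw [coeff_prod_sum_of_natDegree_le _ _ _ fun j _ => hM (σ j) j]
  rfl

theorem ColDegreeLE.natDegree_det_eq [DecidableEq ι] {M : Matrix ι ι R[X]}
    (hM : ColDegreeLE d M) (h : (colLead d M).det ≠ 0) : M.det.natDegree = ∑ j, d j :=
  natDegree_eq_of_le_of_coeff_ne_zero hM.natDegree_det_le (hM.coeff_det ▸ h)

section Combinations

variable {M : Matrix κ ι R[X]} {N : ℕ} {w : ι → R[X]}

theorem ColDegreeLE.natDegree_mulVec_le (hM : ColDegreeLE d M)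
    (hw : ∀ k, w k ≠ 0 → d k + (w k).natDegree ≤ N) (i : κ) : ((M *ᵥ w) i).natDegree ≤ N := by
  refine natDegree_sum_le_of_forall_le _ _ fun k _ => ?_
  by_cases hk : w k = 0
  · simp [hk]
  · exact natDegree_mul_le.trans ((Nat.add_le_add_right (hM i k) _).trans (hw k hk))

theorem ColDegreeLE.coeff_mulVec (hM : ColDegreeLE d M)
    (hw : ∀ k, w k ≠ 0 → d k + (w k).natDegree ≤ N) (i : κ) :
    ((M *ᵥ w) i).coeff N = (colLead d M *ᵥ fun k => (w k).coeff (N - d k)) i := by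
  simp only [mulVec, dotProduct, finsetSum_coeff]
  refine Finset.sum_congr rfl fun k _ => ?_
  by_cases hk : w k = 0
  · simp [hk]
  · have hN := hw k hk
    have htop := coeff_mul_add_eq_of_natDegree_le (hM i k) (Nat.le_sub_of_add_le' hN)
    rwa [Nat.add_sub_cancel' (Nat.le_of_add_right_le hN)] at htop

end Combinations

variable {M : Matrix κ ι R[X]} {N : ℕ} {c : ι → R}

theorem ColDegreeLE.natDegree_mulVec_align_le (hM : ColDegreeLE d M)
    (hc : ∀ k, c k ≠ 0 → d k ≤ N) (i : κ) : ((M *ᵥ align d N c) i).natDegree ≤ N :=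
  hM.natDegree_mulVec_le (add_natDegree_align_le hc) i

theorem ColDegreeLE.coeff_mulVec_align (hM : ColDegreeLE d M) (hc : ∀ k, c k ≠ 0 → d k ≤ N)
    (i : κ) : ((M *ᵥ align d N c) i).coeff N = (colLead d M *ᵥ c) i := by
  rw [hM.coeff_mulVec (add_natDegree_align_le hc)]
  simp only [align, coeff_monomial_same]

theorem ColDegreeLE.pos_of_colLead_mulVec_eq_zero [IsDomain R] [DecidableEq ι]
    {M : Matrix ι ι R[X]} (hM : ColDegreeLE d M) (hdet : M.det ≠ 0) {j : ι} (hj : c j ≠ 0)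
    (hc : ∀ k, c k ≠ 0 → d k ≤ d j) (h : colLead d M *ᵥ c = 0) : 0 < d j := by
  by_contra! h0
  have hzero : M *ᵥ align d (d j) c = 0 := by
    ext1 i
    have hdeg := hM.natDegree_mulVec_align_le hc i
    rw [eq_C_of_natDegree_le_zero (hdeg.trans h0), ← Nat.le_zero.mp h0, hM.coeff_mulVec_align hc, h,
      Pi.zero_apply, C_0, Pi.zero_apply]
  have hcj := congrFun (eq_zero_of_mulVec_eq_zero hdet hzero) j
  simp only [align, tsub_self, Pi.zero_apply, monomial_eq_zero_iff] at hcj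
  exact hj hcj

variable [DecidableEq ι] {j : ι}

/-- The elementary matrix which, acting on the right, adds to column `j` the combination `align`
of the columns, without raising the degree bound of that column. -/
noncomputable def shear (d : ι → ℕ) (j : ι) (c : ι → R) : Matrix ι ι R[X] :=
  1 + vecMulVec (align d (d j) c) (Pi.single j 1)

theorem mul_shear_apply_same (M : Matrix κ ι R[X]) (i : κ) :
    (M * shear d j c) i j = M i j + (M *ᵥ align d (d j) c) i := by
  simp [shear, Matrix.mul_add, mul_vecMulVec, vecMulVec_apply]

theorem mul_shear_apply_of_ne (M : Matrix κ ι R[X]) (i : κ) {k : ι} (hk : k ≠ j) :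
    (M * shear d j c) i k = M i k := by
  simp [shear, Matrix.mul_add, mul_vecMulVec, vecMulVec_apply, hk]

theorem shear_mul_shear_neg (hc : c j = 0) : shear d j c * shear d j (-c) = 1 := by
  have hdot : (Pi.single j 1 : ι → R[X]) ⬝ᵥ align d (d j) (-c) = 0 := by
    simp [align, hc]
  have hneg : align d (d j) (-c) = -align d (d j) c := by
    ext1 k
    simp [align]
  rw [shear, shear, Matrix.mul_add, Matrix.mul_one, Matrix.add_mul, Matrix.one_mul,
    vecMulVec_mul_vecMulVec, hdot, hneg, zero_smul, vecMulVec_zero, neg_vecMulVec]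
  abel

theorem isUnit_shear (hc : c j = 0) : IsUnit (shear d j c) :=
  IsUnit.of_mul_eq_one _ (shear_mul_shear_neg hc)

theorem ColDegreeLE.mul_shear (hM : ColDegreeLE d M) (hc : ∀ k, c k ≠ 0 → d k ≤ d j) :
    ColDegreeLE d (M * shear d j c) := by
  intro i k
  rcases eq_or_ne k j with rfl | hk
  · rw [mul_shear_apply_same]
    exact natDegree_add_le_of_degree_le (hM i k) (hM.natDegree_mulVec_align_le hc i)
  · rw [mul_shear_apply_of_ne M i hk]
    exact hM i k

theorem ColDegreeLE.colLead_mul_shear_col_same (hM : ColDegreeLE d M)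
    (hc : ∀ k, c k ≠ 0 → d k ≤ d j) :
    (colLead d (M * shear d j c)).col j = (colLead d M).col j + colLead d M *ᵥ c := by
  ext1 i
  rw [Pi.add_apply, ← hM.coeff_mulVec_align hc, col_apply, colLead, of_apply, mul_shear_apply_same,
    coeff_add]
  rfl

theorem colLead_mul_shear_col_of_ne {k : ι} (hk : k ≠ j) :
    (colLead d (M * shear d j c)).col k = (colLead d M).col k := by
  ext1 i
  simp only [col_apply, colLead, of_apply, mul_shear_apply_of_ne M i hk]

end Leading

section ColumnReduction

variable {F ι : Type*} [Field F] [Fintype ι] [DecidableEq ι] {d : ι → ℕ}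

theorem sum_update_pred {d : ι → ℕ} {j : ι} (hj : 0 < d j) :
    ∑ i, Function.update d j (d j - 1) i + 1 = ∑ i, d i := by
  rw [Finset.sum_update_of_mem (Finset.mem_univ j),
    Finset.sum_eq_add_sum_sdiff_singleton_of_mem (Finset.mem_univ j) d]
  lia

theorem ColDegreeLE.exists_mul_of_det_colLead_eq_zero {M : Matrix ι ι F[X]}
    (hM : ColDegreeLE d M) (hdet : M.det ≠ 0) (hlead : (colLead d M).det = 0) :
    ∃ U d', IsUnit U ∧ ColDegreeLE d' (M * U) ∧ ∑ j, d' j < ∑ j, d j := by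
  obtain ⟨c, hc0, hc⟩ := exists_mulVec_eq_zero_iff.mpr hlead
  obtain ⟨j, hj, hjmax⟩ : ∃ j, c j ≠ 0 ∧ ∀ k, c k ≠ 0 → d k ≤ d j :=
    Set.exists_max_image {k | c k ≠ 0} d (Set.toFinite _) (Function.ne_iff.mp hc0)
  have hpos : 0 < d j := hM.pos_of_colLead_mulVec_eq_zero hdet hj hjmax hc
  set b : ι → F := (c j)⁻¹ • c - Pi.single j 1 with hb
  have hbj : b j = 0 := by simp [hb, hj]
  have hbmax : ∀ k, b k ≠ 0 → d k ≤ d j := by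
    intro k hk
    rcases eq_or_ne k j with rfl | hkj
    · exact le_rfl
    · exact hjmax k (by simp_all)
  refine ⟨shear d j b, Function.update d j (d j - 1), isUnit_shear hbj,
    (colDegreeLE_update_iff hpos).mpr ⟨hM.mul_shear hbmax, ?_⟩,
    Nat.lt_of_succ_le (sum_update_pred hpos).le⟩
  rw [hM.colLead_mul_shear_col_same hbmax, hb, mulVec_sub, mulVec_smul, hc, mulVec_single_one]
  simp

theorem exists_isUnit_det_colLead_mul_ne_zero (M : Matrix ι ι F[X]) (hdet : M.det ≠ 0) :
    ∃ U d, IsUnit U ∧ ColDegreeLE d (M * U) ∧ (colLead d (M * U)).det ≠ 0 := by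
  have hbound : ColDegreeLE (fun j => ∑ i, (M i j).natDegree) M := fun i j =>
    Finset.single_le_sum (f := fun i => (M i j).natDegree) (fun _ _ => Nat.zero_le _)
      (Finset.mem_univ i)
  revert hdet hbound
  generalize (fun j => ∑ i, (M i j).natDegree) = d
  induction hs : ∑ j, d j using Nat.strong_induction_on generalizing M d with
  | _ s ih =>
    intro hdet hd
    by_cases hlead : (colLead d M).det = 0
    · obtain ⟨U, d', hU, hd', hlt⟩ := hd.exists_mul_of_det_colLead_eq_zero hdet hlead
      have hdetU : (M * U).det ≠ 0 := by
        rw [det_mul]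
        exact mul_ne_zero hdet ((isUnit_iff_isUnit_det U).mp hU).ne_zero
      obtain ⟨U', d'', hU', h⟩ := ih _ (hs ▸ hlt) (M * U) d' rfl hdetU hd'
      rw [Matrix.mul_assoc] at h
      exact ⟨U * U', d'', hU.mul hU', h⟩
    · exact ⟨1, d, isUnit_one, by rwa [Matrix.mul_one], by rwa [Matrix.mul_one]⟩

theorem ColDegreeLE.exists_add_natDegree_le {P : Matrix ι ι F[X]} (hP : ColDegreeLE d P)
    (hlead : (colLead d P).det ≠ 0) {w : ι → F[X]} {j : ι} (hj : w j ≠ 0) :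
    ∃ i, d j + (w j).natDegree ≤ ((P *ᵥ w) i).natDegree := by
  obtain ⟨m, hm, hmax⟩ : ∃ m, w m ≠ 0 ∧
      ∀ k, w k ≠ 0 → d k + (w k).natDegree ≤ d m + (w m).natDegree :=
    Set.exists_max_image {k | w k ≠ 0} _ (Set.toFinite _) ⟨j, hj⟩
  set v : ι → F := fun k => (w k).coeff (d m + (w m).natDegree - d k) with hv
  have hv0 : v ≠ 0 := Function.ne_iff.mpr ⟨m, by simpa [hv] using hm⟩
  obtain ⟨i, hi⟩ := Function.ne_iff.mp fun h => hv0 (eq_zero_of_mulVec_eq_zero hlead h)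
  rw [hv, ← hP.coeff_mulVec hmax] at hi
  exact ⟨i, (hmax j hj).trans (le_natDegree_of_ne_zero hi)⟩

theorem ColDegreeLE.colDegreeLE_const_mul_iff {κ : Type*} {P : Matrix ι ι F[X]}
    (hP : ColDegreeLE d P) (hlead : (colLead d P).det ≠ 0) {k : ℕ} (hdk : ∀ j, d j ≤ k)
    (W : Matrix ι κ F[X]) :
    ColDegreeLE (fun _ => k) (P * W) ↔ ColDegreeLE (fun j => k - d j) Wᵀ := by
  have hmul : ∀ i l, (P * W) i l = (P *ᵥ W.col l) i := fun i l => rfl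
  constructor
  · intro h l j
    by_cases hj : W j l = 0
    · simp [hj]
    · obtain ⟨i, hi⟩ := hP.exists_add_natDegree_le hlead (w := W.col l) hj
      exact Nat.le_sub_of_add_le' (hi.trans (hmul i l ▸ h i l))
  · intro h i l
    rw [hmul]
    exact hP.natDegree_mulVec_le
      (fun j _ => (Nat.add_le_add_left (h l j) _).trans_eq (Nat.add_sub_cancel' (hdk j))) i

end ColumnReduction

section Supported

variable {F κ ι : Type*} [Field F] [Fintype ι] {A : Matrix κ ι F} {J : Finset ι}

theorem mulVec_eq_sum_of_support_subset {c : ι → F} (hc : Function.support c ⊆ (J : Set ι)) :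
    A *ᵥ c = ∑ k ∈ J, c k • A.col k := by
  rw [mulVec_eq_sum, Finset.sum_subset (Finset.subset_univ J) fun k _ hk => ?_]
  · simp only [op_smul_eq_smul]
    rfl
  · rw [Function.support_subset_iff'.mp hc k hk, zero_smul]

theorem mulVec_indicator (c : ι → F) :
    A *ᵥ (J : Set ι).indicator c = ∑ k ∈ J, c k • A.col k := by
  rw [mulVec_eq_sum_of_support_subset Set.support_indicator_subset]
  exact Finset.sum_congr rfl fun k hk => by rw [Set.indicator_of_mem (Finset.mem_coe.mpr hk)]

theorem mem_span_image_col_iff {v : κ → F} :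
    v ∈ Submodule.span F (A.col '' J) ↔
      ∃ c, Function.support c ⊆ (J : Set ι) ∧ A *ᵥ c = v := by
  rw [Submodule.mem_span_image_finset_iff_exists_fun']
  constructor
  · rintro ⟨c, hc⟩
    exact ⟨(J : Set ι).indicator c, Set.support_indicator_subset, (mulVec_indicator c).trans hc⟩
  · rintro ⟨c, hsupp, hc⟩
    exact ⟨c, (mulVec_eq_sum_of_support_subset hsupp).symm.trans hc⟩

theorem linearIndepOn_col_iff :
    LinearIndepOn F A.col (J : Set ι) ↔
      ∀ c, Function.support c ⊆ (J : Set ι) → A *ᵥ c = 0 → c = 0 := by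
  rw [linearIndepOn_finset_iff]
  constructor
  · intro h c hsupp hc
    rw [mulVec_eq_sum_of_support_subset hsupp] at hc
    ext1 k
    by_cases hk : k ∈ J
    · exact h c hc k hk
    · exact Function.support_subset_iff'.mp hsupp k hk
  · intro h c hc k hk
    have hzero := h _ Set.support_indicator_subset ((mulVec_indicator c).trans hc)
    rw [← Set.indicator_of_mem (Finset.mem_coe.mpr hk) c, hzero, Pi.zero_apply]

theorem ncard_support_subset {F ι : Type*} [Zero F] [Fintype F] [Finite ι] (J : Finset ι) :
    {c : ι → F | Function.support c ⊆ (J : Set ι)}.ncard = Fintype.card F ^ J.card := by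
  classical
  have := Fintype.ofFinite ι
  have hpi : {c : ι → F | Function.support c ⊆ (J : Set ι)} =
      Fintype.piFinset fun i => if i ∈ J then (Finset.univ : Finset F) else {0} := by
    ext c
    simp only [Function.support_subset_iff', Set.mem_ofPred_eq, Finset.mem_coe,
      Fintype.mem_piFinset]
    refine forall_congr' fun i => ?_
    split_ifs with hi <;> simp [hi]
  rw [hpi, Set.ncard_coe_finset, Fintype.card_piFinset, ← Finset.prod_const]
  simp [apply_ite Finset.card, Finset.prod_ite_mem]

end Supported

section Unimodular

variable {F ι : Type*} [Field F] [Fintype ι] [DecidableEq ι] {e : ι → ℕ} {J : Finset ι} {j : ι}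

/-- The unimodular matrices with column degrees at most `e` whose leading columns with index in
`J` are linearly independent. -/
def unimodularIndep (F : Type*) [Field F] (e : ι → ℕ) (J : Finset ι) : Set (Matrix ι ι F[X]) :=
  {U | IsUnit U ∧ ColDegreeLE e U ∧ LinearIndepOn F (colLead e U).col (J : Set ι)}

theorem unimodularIndep_anti {J' : Finset ι} (h : J ⊆ J') :
    unimodularIndep F e J' ⊆ unimodularIndep F e J :=
  fun _ hU => ⟨hU.1, hU.2.1, hU.2.2.mono (Finset.coe_subset.mpr h)⟩

theorem mem_unimodularIndep_update_iff (hj : j ∉ J) (hpos : 0 < e j) {U : Matrix ι ι F[X]} :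
    U ∈ unimodularIndep F (Function.update e j (e j - 1)) J ↔
      U ∈ unimodularIndep F e J ∧ (colLead e U).col j = 0 := by
  have hcongr : LinearIndepOn F (colLead (Function.update e j (e j - 1)) U).col (J : Set ι) ↔
      LinearIndepOn F (colLead e U).col (J : Set ι) := by
    refine linearIndepOn_congr fun k hk => ?_
    have hkj : k ≠ j := ne_of_mem_of_not_mem hk hj
    ext1 i
    simp [colLead, col_apply, hkj]
  simp only [unimodularIndep, Set.mem_ofPred_eq, colDegreeLE_update_iff hpos, hcongr]
  tauto

theorem mul_shear_mem_unimodularIndep (hj : j ∉ J) (hmax : ∀ k ∈ J, e k ≤ e j)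
    {U : Matrix ι ι F[X]} (hU : U ∈ unimodularIndep F e J) {c : ι → F}
    (hc : Function.support c ⊆ (J : Set ι)) : U * shear e j c ∈ unimodularIndep F e J := by
  obtain ⟨hunit, hdeg, hind⟩ := hU
  refine ⟨hunit.mul (isUnit_shear (Function.support_subset_iff'.mp hc j hj)),
    hdeg.mul_shear fun k hk => hmax k (hc hk), hind.congr fun k hk => ?_⟩
  exact (colLead_mul_shear_col_of_ne (ne_of_mem_of_not_mem hk hj)).symm

theorem mem_unimodularIndep_insert_iff (hj : j ∉ J) {U : Matrix ι ι F[X]}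
    (hU : U ∈ unimodularIndep F e J) :
    U ∈ unimodularIndep F e (insert j J) ↔
      ¬∃ c, Function.support c ⊆ (J : Set ι) ∧ colLead e U *ᵥ c = (colLead e U).col j := by
  obtain ⟨hunit, hdeg, hind⟩ := hU
  rw [← mem_span_image_col_iff]
  simp only [unimodularIndep, Set.mem_ofPred_eq, hunit, hdeg, true_and, Finset.coe_insert,
    linearIndepOn_insert (Finset.mem_coe.not.mpr hj), hind]

theorem mul_shear_neg_mem_unimodularIndep_update_iff (hj : j ∉ J) (hmax : ∀ k ∈ J, e k ≤ e j)
    (hpos : 0 < e j) {U : Matrix ι ι F[X]} (hU : U ∈ unimodularIndep F e J) {c : ι → F}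
    (hc : Function.support c ⊆ (J : Set ι)) :
    U * shear e j (-c) ∈ unimodularIndep F (Function.update e j (e j - 1)) J ↔
      colLead e U *ᵥ c = (colLead e U).col j := by
  have hc' : Function.support (-c) ⊆ (J : Set ι) := by rwa [Function.support_neg]
  rw [mem_unimodularIndep_update_iff hj hpos,
    and_iff_right (mul_shear_mem_unimodularIndep hj hmax hU hc'),
    hU.2.1.colLead_mul_shear_col_same fun k hk => hmax k (hc' hk), mulVec_neg, add_neg_eq_zero,
    eq_comm]

theorem bijOn_mul_shear (hj : j ∉ J) (hmax : ∀ k ∈ J, e k ≤ e j) (hpos : 0 < e j) :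
    Set.BijOn (fun p : Matrix ι ι F[X] × (ι → F) => p.1 * shear e j p.2)
      (unimodularIndep F (Function.update e j (e j - 1)) J ×ˢ
        {c | Function.support c ⊆ (J : Set ι)})
      (unimodularIndep F e J \ unimodularIndep F e (insert j J)) := by
  have hcancel : ∀ {c : ι → F}, Function.support c ⊆ (J : Set ι) → ∀ V : Matrix ι ι F[X],
      V * shear e j c * shear e j (-c) = V := fun hc V => by
    rw [Matrix.mul_assoc, shear_mul_shear_neg (Function.support_subset_iff'.mp hc j hj),
      Matrix.mul_one]
  have hmem : ∀ {V : Matrix ι ι F[X]} {c : ι → F},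
      V ∈ unimodularIndep F (Function.update e j (e j - 1)) J →
      Function.support c ⊆ (J : Set ι) → V * shear e j c ∈ unimodularIndep F e J := fun hV hc =>
    mul_shear_mem_unimodularIndep hj hmax ((mem_unimodularIndep_update_iff hj hpos).mp hV).1 hc
  have hlead : ∀ {V : Matrix ι ι F[X]} {c : ι → F},
      V ∈ unimodularIndep F (Function.update e j (e j - 1)) J →
      Function.support c ⊆ (J : Set ι) →
      colLead e (V * shear e j c) *ᵥ c = (colLead e (V * shear e j c)).col j := fun {V} _ hV hc =>
    (mul_shear_neg_mem_unimodularIndep_update_iff hj hmax hpos (hmem hV hc) hc).mp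
      ((hcancel hc V).symm ▸ hV)
  refine ⟨?mapsTo, ?injOn, ?surjOn⟩
  case mapsTo =>
    rintro ⟨V, c⟩ ⟨hV, hc⟩
    exact ⟨hmem hV hc, fun h =>
      (mem_unimodularIndep_insert_iff hj (hmem hV hc)).mp h ⟨c, hc, hlead hV hc⟩⟩
  case injOn =>
    rintro ⟨V, c⟩ ⟨hV, hc⟩ ⟨V', c'⟩ ⟨hV', hc'⟩ (heq : V * shear e j c = V' * shear e j c')
    obtain rfl : c = c' := by
      have hsub := (Function.support_sub c c').trans (Set.union_subset hc hc')
      refine sub_eq_zero.mp (linearIndepOn_col_iff.mp (hmem hV hc).2.2 (c - c') hsub ?_)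
      rw [mulVec_sub, hlead hV hc, heq, hlead hV' hc', sub_self]
    rw [← hcancel hc V, heq, hcancel hc' V']
  case surjOn =>
    rintro U ⟨hU, hU'⟩
    obtain ⟨c, hc, hUc⟩ := not_not.mp ((mem_unimodularIndep_insert_iff hj hU).not.mp hU')
    have hc' : Function.support (-c) ⊆ (J : Set ι) := by rwa [Function.support_neg]
    refine ⟨(U * shear e j (-c), c), ⟨?_, hc⟩, ?_⟩
    · exact (mul_shear_neg_mem_unimodularIndep_update_iff hj hmax hpos hU hc).mpr hUc
    · simpa using hcancel hc' U

end Unimodular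

section CountUnimodular

theorem natCard_degreeLT (F : Type*) [Semiring F] [Finite F] (N : ℕ) :
    Nat.card (degreeLT F N) = Nat.card F ^ N := by
  rw [Nat.card_congr (degreeLTEquiv F N).toEquiv, Nat.card_fun, Nat.card_fin]

instance finite_degreeLT (F : Type*) [Semiring F] [Finite F] (N : ℕ) : Finite (degreeLT F N) :=
  Finite.of_equiv _ (degreeLTEquiv F N).symm.toEquiv

theorem finite_natDegree_le (R : Type*) [Semiring R] [Finite R] (N : ℕ) :
    {p : R[X] | p.natDegree ≤ N}.Finite := by
  have hfin : (degreeLT R (N + 1) : Set R[X]).Finite := finite_degreeLT R (N + 1)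
  rw [degreeLT_succ_eq_degreeLE] at hfin
  exact hfin.subset fun _ hp => mem_degreeLE.mpr (natDegree_le_iff_degree_le.mp hp)

theorem finite_colDegreeLE {R κ ι : Type*} [CommRing R] [Finite R] [Finite κ] [Finite ι]
    (e : ι → ℕ) : {M : Matrix κ ι R[X] | ColDegreeLE e M}.Finite :=
  Set.Finite.pi' fun _ => Set.Finite.pi' fun j => finite_natDegree_le R (e j)

variable {F ι : Type*} [Field F] [Fintype ι] [DecidableEq ι] {e : ι → ℕ} {J : Finset ι} {j : ι}

theorem ncard_unimodularIndep_eq_add [Fintype F] (hj : j ∉ J) (hmax : ∀ k ∈ J, e k ≤ e j)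
    (hpos : 0 < e j) :
    (unimodularIndep F e J).ncard = (unimodularIndep F e (insert j J)).ncard +
      Fintype.card F ^ J.card * (unimodularIndep F (Function.update e j (e j - 1)) J).ncard := by
  have hfin : (unimodularIndep F e J).Finite :=
    (finite_colDegreeLE e).subset fun _ hU => hU.2.1
  rw [← Set.ncard_sdiff_add_ncard_of_subset
    (unimodularIndep_anti (Finset.subset_insert j J)) hfin,
    ← (bijOn_mul_shear hj hmax hpos).ncard_eq, Set.ncard_prod, ncard_support_subset]
  ring

theorem unimodularIndep_eq_of_eq_zero (h0 : ∀ k ∈ J, e k = 0) :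
    unimodularIndep F e J = unimodularIndep F e ∅ := by
  refine (unimodularIndep_anti (Finset.empty_subset J)).antisymm ?_
  rintro U ⟨hunit, hdeg, -⟩
  refine ⟨hunit, hdeg, linearIndepOn_col_iff.mpr fun c hsupp hc => ?_⟩
  by_contra hne
  obtain ⟨k, hk⟩ := Function.ne_iff.mp hne
  have hdet := ((isUnit_iff_isUnit_det U).mp hunit).ne_zero
  have hpos := hdeg.pos_of_colLead_mulVec_eq_zero hdet hk
    (fun l hl => (h0 l (hsupp hl)).trans_le (Nat.zero_le _)) hc
  exact hpos.ne' (h0 k (hsupp hk))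

theorem unimodularIndep_univ_eq_empty (he : 0 < ∑ k, e k) :
    unimodularIndep F e Finset.univ = ∅ := by
  refine Set.eq_empty_of_forall_notMem ?_
  rintro U ⟨hunit, hdeg, hind⟩
  have hlead : (colLead e U).det ≠ 0 := fun h0 => by
    obtain ⟨c, hne, hc⟩ := exists_mulVec_eq_zero_iff.mpr h0
    exact hne (linearIndepOn_col_iff.mp hind c (by simp) hc)
  have hdet := natDegree_eq_zero_of_isUnit ((isUnit_iff_isUnit_det U).mp hunit)
  rw [hdeg.natDegree_det_eq hlead] at hdet
  exact he.ne' hdet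

theorem ncard_unimodularIndep_zero_empty :
    (unimodularIndep F (0 : ι → ℕ) ∅).ncard = Nat.card (GL ι F) := by
  have hinj : Function.Injective fun g : GL ι F => (C : F →+* F[X]).mapMatrix g.val := fun g g' h =>
    Units.ext (map_injective C_injective h)
  have hunit : ∀ A : Matrix ι ι F, IsUnit ((C : F →+* F[X]).mapMatrix A) ↔ IsUnit A := fun A => by
    rw [isUnit_iff_isUnit_det, ← RingHom.map_det, isUnit_C, isUnit_iff_isUnit_det]
  have hrange : unimodularIndep F (0 : ι → ℕ) ∅ =
      Set.range fun g : GL ι F => (C : F →+* F[X]).mapMatrix g.val := by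
    ext U
    constructor
    · rintro ⟨hU, hdeg, -⟩
      have hconst : (C : F →+* F[X]).mapMatrix (colLead 0 U) = U := by
        ext1 i j
        exact (eq_C_of_natDegree_le_zero (hdeg i j)).symm
      exact ⟨((hunit _).mp (hconst.symm ▸ hU)).unit, hconst⟩
    · rintro ⟨g, rfl⟩
      exact ⟨(hunit _).mpr g.isUnit, fun i j => by simp, by simp⟩
  rw [hrange, ← Nat.card_coe_set_eq, Nat.card_range_of_injective hinj]

/-- The value of `(unimodularIndep F e J).ncard`. The product runs over as many factors as there
are indices in `J` with `e k ≠ 0`, and vanishes as soon as it reaches `i = card ι - 1`. -/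
noncomputable def unimodularCount (F : Type*) [Field F] [Fintype F] (e : ι → ℕ) (J : Finset ι) :
    ℚ :=
  Nat.card (GL ι F) * (Fintype.card F : ℚ) ^ ((Fintype.card ι - 1) * ∑ k, e k) *
    ∏ i ∈ Finset.Ico {k ∈ J | e k = 0}.card J.card,
      (1 - (Fintype.card F : ℚ) ^ i / (Fintype.card F : ℚ) ^ (Fintype.card ι - 1))

variable [Fintype F]

theorem unimodularCount_of_eq_zero (h0 : ∀ k ∈ J, e k = 0) :
    unimodularCount F e J =
      Nat.card (GL ι F) * (Fintype.card F : ℚ) ^ ((Fintype.card ι - 1) * ∑ k, e k) := by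
  rw [unimodularCount, Finset.filter_true_of_mem h0, Finset.Ico_self, Finset.prod_empty, mul_one]

theorem unimodularCount_univ (he : 0 < ∑ k, e k) : unimodularCount F e Finset.univ = 0 := by
  obtain ⟨k, -, hk⟩ := Finset.sum_pos_iff.mp he
  have hcard : ({k | e k = 0} : Finset ι).card < Fintype.card ι :=
    Finset.card_lt_univ_of_notMem (x := k) (by simpa using hk.ne')
  refine mul_eq_zero_of_right _ (Finset.prod_eq_zero (i := Fintype.card ι - 1) ?_ ?_)
  · rw [Finset.mem_Ico, Finset.card_univ]
    lia
  · rw [div_self (pow_ne_zero _ (Nat.cast_ne_zero.mpr Fintype.card_ne_zero)), sub_self]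

theorem unimodularCount_insert (hj : j ∉ J) (hpos : 0 < e j) :
    unimodularCount F e J = unimodularCount F e (insert j J) +
      (Fintype.card F : ℚ) ^ J.card *
        unimodularCount F (Function.update e j (e j - 1)) J := by
  have hupdate : {k ∈ J | Function.update e j (e j - 1) k = 0} = {k ∈ J | e k = 0} :=
    Finset.filter_congr fun k hk => by
      rw [Function.update_of_ne (ne_of_mem_of_not_mem hk hj)]
  have hinsert : {k ∈ insert j J | e k = 0} = {k ∈ J | e k = 0} := by
    rw [Finset.filter_insert, if_neg hpos.ne']
  rw [unimodularCount, unimodularCount, unimodularCount, hupdate, hinsert,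
    Finset.card_insert_of_notMem hj, Finset.prod_Ico_succ_top (Finset.card_filter_le _ _),
    ← sum_update_pred hpos, mul_add, mul_one, pow_add]
  field_simp
  ring

theorem ncard_unimodularIndep_sub_unimodularCount
    (hlow : ∀ j J, 0 < e j → ((unimodularIndep F (Function.update e j (e j - 1)) J).ncard : ℚ) =
      unimodularCount F (Function.update e j (e j - 1)) J) (J : Finset ι) :
    ((unimodularIndep F e J).ncard : ℚ) - unimodularCount F e J =
      (unimodularIndep F e ∅).ncard - unimodularCount F e ∅ := by
  induction J using Finset.induction_on_max_value e with
  | empty => rfl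
  | insert j J hj hmax ih =>
    rcases Nat.eq_zero_or_pos (e j) with h0 | hpos
    · have hzero : ∀ k ∈ insert j J, e k = 0 :=
        Finset.forall_mem_insert .. |>.mpr ⟨h0, fun k hk => Nat.le_zero.mp (h0 ▸ hmax k hk)⟩
      rw [unimodularIndep_eq_of_eq_zero hzero, unimodularCount_of_eq_zero hzero,
        unimodularCount_of_eq_zero (J := ∅) (by simp)]
    · have hncard := ncard_unimodularIndep_eq_add (F := F) hj hmax hpos
      have hcount := unimodularCount_insert (F := F) hj hpos
      rw [← hlow j J hpos] at hcount
      rw [← ih, hcount, hncard]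
      push_cast
      ring

-- The discrepancy between the two sides is independent of `J`, and vanishes for `J = univ`.
theorem ncard_unimodularIndep (e : ι → ℕ) (J : Finset ι) :
    ((unimodularIndep F e J).ncard : ℚ) = unimodularCount F e J := by
  induction hE : ∑ k, e k generalizing e J with
  | zero =>
    obtain rfl : e = 0 := funext fun k => Finset.sum_eq_zero_iff.mp hE k (Finset.mem_univ k)
    have hzero : ∀ k ∈ J, (0 : ι → ℕ) k = 0 := fun _ _ => rfl
    rw [unimodularIndep_eq_of_eq_zero hzero, ncard_unimodularIndep_zero_empty,
      unimodularCount_of_eq_zero hzero, hE, mul_zero, pow_zero, mul_one]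
  | succ E ih =>
    have hconst := ncard_unimodularIndep_sub_unimodularCount (F := F) (e := e) fun j J hpos =>
      ih _ J (Nat.succ_injective ((sum_update_pred hpos).trans hE))
    have hpos : 0 < ∑ k, e k := hE ▸ Nat.succ_pos E
    have huniv := hconst Finset.univ
    rw [unimodularIndep_univ_eq_empty hpos, unimodularCount_univ hpos, Set.ncard_empty,
      Nat.cast_zero, sub_zero, eq_comm] at huniv
    exact sub_eq_zero.mp ((hconst J).trans huniv)

theorem ncard_isUnit_colDegreeLE (e : ι → ℕ) :
    {U : Matrix ι ι F[X] | IsUnit U ∧ ColDegreeLE e U}.ncard =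
      Nat.card (GL ι F) * Fintype.card F ^ ((Fintype.card ι - 1) * ∑ k, e k) := by
  have hempty : unimodularIndep F e ∅ = {U | IsUnit U ∧ ColDegreeLE e U} := by
    simp [unimodularIndep]
  have hcount := ncard_unimodularIndep (F := F) e ∅
  rw [unimodularCount_of_eq_zero (by simp), hempty] at hcount
  exact_mod_cast hcount

end CountUnimodular

section Fibre

variable {F ι : Type*} [Field F] [Fintype ι] [DecidableEq ι]

theorem natDegree_det_mul_of_isUnit {M U : Matrix ι ι F[X]} (hM : M.det ≠ 0) (hU : IsUnit U) :
    (M * U).det.natDegree = M.det.natDegree := by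
  have hdetU := (isUnit_iff_isUnit_det U).mp hU
  rw [det_mul, natDegree_mul hM hdetU.ne_zero, natDegree_eq_zero_of_isUnit hdetU, add_zero]

theorem ncard_isUnit_mul_colDegreeLE_const [Fintype F] {H : Matrix ι ι F[X]} (hH : H.det ≠ 0)
    {k : ℕ} (hk : H.det.natDegree ≤ k) :
    {U : Matrix ι ι F[X] | IsUnit U ∧ ColDegreeLE (fun _ => k) (H * U)}.ncard =
      Nat.card (GL ι F) * Fintype.card F ^
        ((Fintype.card ι - 1) * (Fintype.card ι * k - H.det.natDegree)) := by
  obtain ⟨V, d, ⟨V, rfl⟩, hdeg, hlead⟩ := exists_isUnit_det_colLead_mul_ne_zero H hH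
  have hsum : ∑ j, d j = H.det.natDegree := by
    rw [← hdeg.natDegree_det_eq hlead, natDegree_det_mul_of_isUnit hH V.isUnit]
  have hdk : ∀ j, d j ≤ k := fun j =>
    (Finset.single_le_sum (fun _ _ => Nat.zero_le _) (Finset.mem_univ j)).trans (hsum.trans_le hk)
  have hexp : ∑ j, (k - d j) = Fintype.card ι * k - H.det.natDegree := by
    rw [Finset.sum_tsub_distrib _ fun j _ => hdk j, hsum, Finset.sum_const, Finset.card_univ,
      smul_eq_mul]
  have hinj : Function.Injective fun W : Matrix ι ι F[X] => V.val * Wᵀ := fun W W' h =>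
    transpose_injective (V.isUnit.mul_left_cancel h)
  have himage : {U : Matrix ι ι F[X] | IsUnit U ∧ ColDegreeLE (fun _ => k) (H * U)} =
      (fun W => V.val * Wᵀ) '' {W | IsUnit W ∧ ColDegreeLE (fun j => k - d j) W} := by
    ext U
    constructor
    · rintro ⟨hU, hUk⟩
      refine ⟨(V.inv * U)ᵀ, ⟨(isUnit_transpose _).mpr (V⁻¹.isUnit.mul hU), ?_⟩,
        by simp [← Matrix.mul_assoc]⟩
      rwa [← hdeg.colDegreeLE_const_mul_iff hlead hdk, Matrix.mul_assoc,
        ← Matrix.mul_assoc V.val, Units.val_inv, Matrix.one_mul]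
    · rintro ⟨W, ⟨hW, hWk⟩, rfl⟩
      refine ⟨V.isUnit.mul ((isUnit_transpose _).mpr hW), ?_⟩
      rwa [← Matrix.mul_assoc, hdeg.colDegreeLE_const_mul_iff hlead hdk, transpose_transpose]
  rw [himage, Set.ncard_image_of_injective _ hinj, ncard_isUnit_colDegreeLE, hexp]

end Fibre

section RowClearing

variable {R κ ι : Type*} [EuclideanDomain R] [Fintype ι] [DecidableEq ι] {i j : ι}

theorem exists_isUnit_mul_apply_eq_zero (hij : i ≠ j) (M : Matrix κ ι R) (a : κ) :
    ∃ U : Matrix ι ι R, IsUnit U ∧ (M * U) a j = 0 ∧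
      ∀ l, l ≠ i → l ≠ j → (M * U) a l = M a l := by
  suffices h : ∀ x y, ∀ M : Matrix κ ι R, M a j = x → M a i = y → ∃ U : Matrix ι ι R,
      IsUnit U ∧ (M * U) a j = 0 ∧ ∀ l, l ≠ i → l ≠ j → (M * U) a l = M a l from
    h _ _ M rfl rfl
  intro x y
  induction x, y using EuclideanDomain.GCD.induction with
  | H0 y => exact fun M hx _ => ⟨1, isUnit_one, by rwa [Matrix.mul_one], by simp⟩
  | H1 x y hx ih =>
    rintro M rfl rfl
    let T := transvection j i (-(M a i / M a j)) * swap R i j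
    have hT : IsUnit T := by
      refine .mul ?_ ⟨⟨swap R i j, swap R i j, swap_mul_self i j, swap_mul_self i j⟩, rfl⟩
      rw [isUnit_iff_isUnit_det, det_transvection_of_ne _ _ hij.symm]
      exact isUnit_one
    have hTj : (M * T) a j = M a i % M a j := by
      rw [← Matrix.mul_assoc, mul_swap_apply_right, mul_transvection_apply_same,
        EuclideanDomain.mod_eq_sub_mul_div]
      ring
    have hTi : (M * T) a i = M a j := by
      rw [← Matrix.mul_assoc, mul_swap_apply_left, mul_transvection_apply_of_ne _ _ _ _ hij.symm]
    obtain ⟨U, hU, hzero, hrest⟩ := ih (M * T) hTj hTi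
    refine ⟨T * U, hT.mul hU, by rwa [← Matrix.mul_assoc], fun l hli hlj => ?_⟩
    rw [← Matrix.mul_assoc, hrest l hli hlj, ← Matrix.mul_assoc, mul_swap_of_ne hli hlj,
      mul_transvection_apply_of_ne _ _ _ _ hli]

theorem exists_isUnit_forall_mul_apply_eq_zero (M : Matrix κ ι R) (a : κ) (i : ι) :
    ∃ U : Matrix ι ι R, IsUnit U ∧ ∀ j, j ≠ i → (M * U) a j = 0 := by
  suffices h : ∀ s : Finset ι, i ∉ s →
      ∃ U : Matrix ι ι R, IsUnit U ∧ ∀ j ∈ s, (M * U) a j = 0 by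
    obtain ⟨U, hU, hzero⟩ := h (Finset.univ.erase i) (Finset.notMem_erase i _)
    exact ⟨U, hU, fun j hj => hzero j (Finset.mem_erase.mpr ⟨hj, Finset.mem_univ j⟩)⟩
  intro s
  induction s using Finset.induction_on with
  | empty => exact fun _ => ⟨1, isUnit_one, by simp⟩
  | insert j s _ ih =>
    intro hi
    rw [Finset.mem_insert, not_or] at hi
    obtain ⟨U, hU, hzero⟩ := ih hi.2
    obtain ⟨V, hV, hzero_j, hrest⟩ := exists_isUnit_mul_apply_eq_zero hi.1 (M * U) a
    refine ⟨U * V, hU.mul hV, fun l hl => ?_⟩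
    rw [← Matrix.mul_assoc]
    by_cases hlj : l = j
    · rwa [hlj]
    · have hls := Finset.mem_of_mem_insert_of_ne hl hlj
      rw [hrest l (ne_of_mem_of_not_mem hls hi.2) hlj, hzero l hls]

end RowClearing

section Bordered

variable {R : Type*} [CommRing R] {n : ℕ}

/-- The lower block triangular matrix with corner `s`, first row `(s, 0, …, 0)`, first column
`(s, z)` and remaining block `V`. -/
def bordered (s : R) (z : Fin n → R) (V : Matrix (Fin n) (Fin n) R) :
    Matrix (Fin (n + 1)) (Fin (n + 1)) R :=
  of (Fin.cons (Fin.cons s 0) fun i => Fin.cons (z i) (V i))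

variable (s s' : R) (z z' : Fin n → R) (V V' : Matrix (Fin n) (Fin n) R)

@[simp]
theorem bordered_zero_zero : bordered s z V 0 0 = s := rfl

@[simp]
theorem bordered_zero_succ (j : Fin n) : bordered s z V 0 j.succ = 0 := rfl

@[simp]
theorem bordered_succ_zero (i : Fin n) : bordered s z V i.succ 0 = z i := rfl

@[simp]
theorem bordered_succ_succ (i j : Fin n) : bordered s z V i.succ j.succ = V i j := rfl

theorem bordered_mul_bordered :
    bordered s z V * bordered s' z' V' = bordered (s * s') (s' • z + V *ᵥ z') (V * V') := by
  ext i j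
  rw [Matrix.mul_apply, Fin.sum_univ_succ]
  refine Fin.cases ?_ (fun i => ?_) i <;> refine Fin.cases ?_ (fun j => ?_) j <;>
    simp [Matrix.mul_apply, mulVec, dotProduct, mul_comm]

theorem det_bordered : (bordered s z V).det = s * V.det := by
  have hsub : (bordered s z V).submatrix Fin.succ Fin.succ = V := rfl
  simp [det_succ_row_zero, Fin.sum_univ_succ, hsub]

theorem exists_eq_bordered {M : Matrix (Fin (n + 1)) (Fin (n + 1)) R}
    (h : ∀ j, j ≠ 0 → M 0 j = 0) : ∃ s z V, M = bordered s z V := by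
  refine ⟨M 0 0, fun i => M i.succ 0, M.submatrix Fin.succ Fin.succ, ?_⟩
  ext i j
  refine Fin.cases ?_ (fun i => ?_) i <;> refine Fin.cases ?_ (fun j => ?_) j <;>
    simp [h]

end Bordered

section Hermite

variable {F ι : Type*} [Field F] [LinearOrder ι]

/-- A square matrix of polynomials is in (column-style) Hermite normal form if it is lower
triangular with monic diagonal and each off-diagonal entry has smaller degree than the diagonal
entry of its row. -/
structure IsHermite (H : Matrix ι ι F[X]) : Prop where
  monic i : (H i i).Monic
  eq_zero i j : i < j → H i j = 0
  degree_lt i j : j < i → (H i j).degree < (H i i).degree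

variable {H U : Matrix ι ι F[X]}

theorem IsHermite.degree_zero_lt (hH : IsHermite H) (i : ι) :
    (0 : F[X]).degree < (H i i).degree := by
  rw [degree_zero, bot_lt_iff_ne_bot, degree_ne_bot]
  exact (hH.monic i).ne_zero

variable [Fintype ι]

theorem IsHermite.det_eq (hH : IsHermite H) : H.det = ∏ i, H i i :=
  det_of_isLowerTriangular H fun i j h => hH.eq_zero i j h

theorem IsHermite.det_ne_zero (hH : IsHermite H) : H.det ≠ 0 := by
  rw [hH.det_eq]
  exact (monic_prod_of_monic _ _ fun i _ => hH.monic i).ne_zero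

theorem IsHermite.natDegree_det (hH : IsHermite H) :
    H.det.natDegree = ∑ i, (H i i).natDegree := by
  rw [hH.det_eq, natDegree_prod_of_monic _ _ fun i _ => hH.monic i]

theorem IsHermite.colDegreeLE_natDegree_det (hH : IsHermite H) :
    ColDegreeLE (fun _ => H.det.natDegree) H := by
  intro i j
  have hdiag : (H i i).natDegree ≤ H.det.natDegree := by
    rw [hH.natDegree_det]
    exact Finset.single_le_sum (f := fun i => (H i i).natDegree) (fun _ _ => Nat.zero_le _)
      (Finset.mem_univ i)
  refine le_trans ?_ hdiag
  rcases lt_trichotomy i j with h | rfl | h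
  · simp [hH.eq_zero i j h]
  · exact le_rfl
  · exact natDegree_le_natDegree (hH.degree_lt i j h).le

variable (F ι) in
theorem finite_isHermite_natDegree_det_eq [Finite F] (t : ℕ) :
    {H : Matrix ι ι F[X] | IsHermite H ∧ H.det.natDegree = t}.Finite := by
  refine (finite_colDegreeLE fun _ => t).subset ?_
  rintro H ⟨hH, rfl⟩
  exact hH.colDegreeLE_natDegree_det

theorem IsHermite.mulVec_apply_of_forall_lt (hH : IsHermite H) {z : ι → F[X]} {a : ι}
    (hz : ∀ i < a, z i = 0) : (H *ᵥ z) a = H a a * z a := by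
  rw [mulVec, dotProduct, Finset.sum_eq_single a (fun i _ hia => ?_) (by simp)]
  rcases lt_or_gt_of_ne hia with h | h
  · rw [hz i h, mul_zero]
  · rw [hH.eq_zero a i h, zero_mul]

theorem IsHermite.eq_zero_of_degree_mulVec_lt (hH : IsHermite H) {z : ι → F[X]} {a : ι}
    (h : ∀ i ≤ a, ((H *ᵥ z) i).degree < (H i i).degree) : z a = 0 := by
  induction a using WellFoundedLT.induction with
  | ind a ih =>
    have hlt := h a le_rfl
    rw [hH.mulVec_apply_of_forall_lt fun i hi => ih i hi fun l hl => h l (hl.trans hi.le)] at hlt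
    by_contra hza
    exact (degree_le_mul_left _ hza).not_gt hlt

theorem IsHermite.mul_apply_self_of_isHermite_mul (hH : IsHermite H) (hHU : IsHermite (H * U))
    (j : ι) : (H * U) j j = H j j * U j j := by
  refine hH.mulVec_apply_of_forall_lt (z := U.col j) fun i hij =>
    hH.eq_zero_of_degree_mulVec_lt fun l hl => ?_
  change ((H * U) l j).degree < _
  rw [hHU.eq_zero l j (hl.trans_lt hij)]
  exact hH.degree_zero_lt l

theorem IsHermite.eq_one_of_isHermite_mul (hH : IsHermite H) (hU : IsUnit U)
    (hHU : IsHermite (H * U)) : U = 1 := by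
  obtain ⟨U, rfl⟩ := hU
  have hdiag : ∀ j, (H * U.val) j j = H j j := by
    have hback : H * U.val * U⁻¹.val = H := by rw [Matrix.mul_assoc, Units.mul_inv, Matrix.mul_one]
    intro j
    have hdvd := Dvd.intro _ (hH.mul_apply_self_of_isHermite_mul hHU j).symm
    have hdvd' := Dvd.intro _ (hHU.mul_apply_self_of_isHermite_mul (by rwa [hback]) j).symm
    rw [hback] at hdvd'
    exact eq_of_monic_of_associated (hHU.monic j) (hH.monic j) (associated_of_dvd_dvd hdvd' hdvd)
  ext1 i j
  rw [← sub_eq_zero, ← Matrix.sub_apply]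
  refine hH.eq_zero_of_degree_mulVec_lt (z := (U.val - 1).col j) fun l _ => ?_
  change ((H * (U.val - 1)) l j).degree < _
  rw [Matrix.mul_sub, Matrix.mul_one, Matrix.sub_apply]
  rcases lt_trichotomy l j with h | rfl | h
  · rw [hHU.eq_zero l j h, hH.eq_zero l j h, sub_zero]
    exact hH.degree_zero_lt l
  · rw [hdiag, sub_self]
    exact hH.degree_zero_lt l
  · refine (degree_sub_le _ _).trans_lt (max_lt ?_ (hH.degree_lt l j h))
    rw [← hdiag]
    exact hHU.degree_lt l j h

theorem IsHermite.injOn_mul :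
    Set.InjOn (fun p : Matrix ι ι F[X] × Matrix ι ι F[X] => p.1 * p.2)
      {p | IsHermite p.1 ∧ IsUnit p.2} := by
  rintro ⟨H, _⟩ ⟨hH, U, rfl⟩ ⟨H', _⟩ ⟨hH', U', rfl⟩ (h : H * U.val = H' * U'.val)
  have hH'_eq : H' = H * (U * U'⁻¹).val := by
    rw [Units.val_mul, ← Matrix.mul_assoc, h, Matrix.mul_assoc, Units.mul_inv, Matrix.mul_one]
  have hone : U * U'⁻¹ = 1 :=
    Units.ext (hH.eq_one_of_isHermite_mul (U * U'⁻¹).isUnit (hH'_eq ▸ hH'))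
  rw [hH'_eq, hone, Units.val_one, Matrix.mul_one, mul_inv_eq_one.mp hone]

theorem IsHermite.exists_degree_add_mulVec_lt (hH : IsHermite H) (c : ι → F[X]) :
    ∃ z : ι → F[X], ∀ i, (c i + (H *ᵥ z) i).degree < (H i i).degree := by
  suffices h : ∀ s : Finset ι, ∃ z : ι → F[X],
      ∀ i ∈ s, (c i + (H *ᵥ z) i).degree < (H i i).degree by
    simpa using h Finset.univ
  intro s
  induction s using Finset.induction_on_max with
  | empty => simp
  | insert a s hmax ih =>
    obtain ⟨z, hz⟩ := ih
    let r := c a + (H *ᵥ z) a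
    have hstep : ∀ i, c i + (H *ᵥ (z + Pi.single a (-(r /ₘ H a a)))) i =
        c i + (H *ᵥ z) i - H i a * (r /ₘ H a a) := fun i => by
      simp [mulVec_add, add_assoc, sub_eq_add_neg, mul_comm]
    refine ⟨z + Pi.single a (-(r /ₘ H a a)), fun i hi => ?_⟩
    rw [hstep]
    rcases Finset.mem_insert.mp hi with rfl | his
    · rw [← modByMonic_eq_sub_mul_div]
      exact degree_modByMonic_lt r (hH.monic i)
    · rw [hH.eq_zero i a (hmax i his), zero_mul, sub_zero]
      exact hz i his

end Hermite

section HermiteExistence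

variable {F : Type*} [Field F] {n : ℕ}

theorem IsHermite.bordered {s : F[X]} {z : Fin n → F[X]} {H : Matrix (Fin n) (Fin n) F[X]}
    (hH : IsHermite H) (hs : s.Monic) (hz : ∀ i, (z i).degree < (H i i).degree) :
    IsHermite (bordered s z H) where
  monic i := Fin.cases hs hH.monic i
  eq_zero i j := by
    refine Fin.cases ?_ (fun i => ?_) i <;> refine Fin.cases ?_ (fun j => ?_) j <;>
      simp +contextual [hH.eq_zero]
  degree_lt i j := by
    refine Fin.cases ?_ (fun i => ?_) i <;> refine Fin.cases ?_ (fun j => ?_) j <;>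
      simp +contextual [hH.degree_lt, hz]

theorem exists_isHermite_mul {M : Matrix (Fin n) (Fin n) F[X]} (hM : M.det ≠ 0) :
    ∃ U : Matrix (Fin n) (Fin n) F[X], IsUnit U ∧ IsHermite (M * U) := by
  induction n with
  | zero => exact ⟨1, isUnit_one, ⟨fun i => i.elim0, fun i => i.elim0, fun i => i.elim0⟩⟩
  | succ n ih =>
    obtain ⟨U, hU, hrow⟩ := exists_isUnit_forall_mul_apply_eq_zero M 0 0
    obtain ⟨g, c, N, hMU⟩ := exists_eq_bordered hrow
    have hdet : g * N.det ≠ 0 := by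
      rw [← det_bordered g c, ← hMU, det_mul]
      exact mul_ne_zero hM ((isUnit_iff_isUnit_det U).mp hU).ne_zero
    have hg : g ≠ 0 := left_ne_zero_of_mul hdet
    obtain ⟨V, hV, hNV⟩ := ih (right_ne_zero_of_mul hdet)
    let s : F[X] := C g.leadingCoeff⁻¹
    have hs : IsUnit s := isUnit_C.mpr (inv_ne_zero (leadingCoeff_ne_zero.mpr hg)).isUnit
    obtain ⟨z, hz⟩ := hNV.exists_degree_add_mulVec_lt (s • c)
    refine ⟨U * bordered s (V *ᵥ z) V, hU.mul ?_, ?_⟩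
    · rw [isUnit_iff_isUnit_det, det_bordered]
      exact hs.mul ((isUnit_iff_isUnit_det V).mp hV)
    · rw [← Matrix.mul_assoc, hMU, bordered_mul_bordered, mulVec_mulVec]
      exact hNV.bordered (monic_mul_leadingCoeff_inv hg) hz

end HermiteExistence

section HermiteCount

theorem ncard_eq_sum_ncard_fiberwise {α β : Type*} {s : Set α} {T : Finset β} {f : α → β}
    (hf : Set.MapsTo f s T) (hfin : ∀ b ∈ T, {a ∈ s | f a = b}.Finite) :
    s.ncard = ∑ b ∈ T, {a ∈ s | f a = b}.ncard := by
  classical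
  have hs : s.Finite := (T.finite_toSet.biUnion hfin).subset fun a ha =>
    Set.mem_biUnion (hf ha) ⟨ha, rfl⟩
  lift s to Finset α using hs
  rw [Set.ncard_coe_finset, Finset.card_eq_sum_card_fiberwise hf]
  refine Finset.sum_congr rfl fun b _ => ?_
  rw [← Set.ncard_coe_finset, Finset.coe_filter]
  rfl

variable {F ι : Type*} [Field F] [LinearOrder ι]

theorem isHermite_and_natDegree_eq_iff {f : ι → ℕ} {H : Matrix ι ι F[X]} :
    (IsHermite H ∧ ∀ i, (H i i).natDegree = f i) ↔
      ∀ i j, H i j - diagonal (fun i => X ^ f i) i j ∈ degreeLT F (if j ≤ i then f i else 0) := by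
  simp only [mem_degreeLT]
  constructor
  · rintro ⟨hH, hf⟩ i j
    rcases lt_trichotomy i j with h | rfl | h
    · simp [hH.eq_zero i j h, h.ne, h.not_ge]
    · have hdeg : (H i i).degree = f i := by rw [degree_eq_natDegree (hH.monic i).ne_zero, hf]
      rw [diagonal_apply_eq, if_pos le_rfl, ← hdeg]
      refine degree_sub_lt_left (by rw [hdeg, degree_X_pow]) (hH.monic i).ne_zero ?_
      rw [(hH.monic i).leadingCoeff, (monic_X_pow _).leadingCoeff]
    · have hlt := hH.degree_lt i j h
      rw [degree_eq_natDegree (hH.monic i).ne_zero, hf] at hlt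
      simpa [h.ne', h.le] using hlt
  · intro h
    have hdiag : ∀ i, (H i i - X ^ f i).degree < (f i : WithBot ℕ) := fun i => by
      simpa using h i i
    have hmonic : ∀ i, (H i i).Monic := fun i => by
      simpa using monic_X_pow_add (hdiag i)
    have hdeg : ∀ i, (H i i).degree = f i := fun i => by
      have hlt := (hdiag i).trans_eq (degree_X_pow (R := F) (f i)).symm
      simpa using degree_add_eq_left_of_degree_lt hlt
    refine ⟨⟨hmonic, fun i j hij => ?_, fun i j hij => ?_⟩,
      fun i => natDegree_eq_of_degree_eq_some (hdeg i)⟩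
    · simpa [hij.ne, hij.not_ge] using h i j
    · rw [hdeg]
      simpa [hij.ne', hij.le] using h i j

theorem ncard_isHermite_and_natDegree_eq [Fintype F] [Fintype ι] [LocallyFiniteOrderBot ι]
    (f : ι → ℕ) :
    {H : Matrix ι ι F[X] | IsHermite H ∧ ∀ i, (H i i).natDegree = f i}.ncard =
      Fintype.card F ^ ∑ i, (Finset.Iic i).card * f i := by
  let D : Matrix ι ι F[X] := diagonal fun i => X ^ f i
  let P (i j : ι) : Submodule F F[X] := degreeLT F (if j ≤ i then f i else 0)
  have e : {H : Matrix ι ι F[X] // ∀ i j, H i j - D i j ∈ P i j} ≃ ∀ i j, P i j :=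
    { toFun := fun H i j => ⟨H.1 i j - D i j, H.2 i j⟩
      invFun := fun Q => ⟨of fun i j => Q i j + D i j, fun i j => by simp⟩
      left_inv := fun H => by ext; simp
      right_inv := fun Q => by ext; simp }
  simp only [isHermite_and_natDegree_eq_iff]
  rw [← Nat.card_coe_set_eq, Set.coe_ofPred, Nat.card_congr e, Nat.card_pi,
    ← Finset.prod_pow_eq_pow_sum]
  refine Finset.prod_congr rfl fun i _ => ?_
  have hIic : Finset.univ.filter (fun j => j ≤ i) = Finset.Iic i := by ext; simp
  simp only [P, Nat.card_pi, natCard_degreeLT, Nat.card_eq_fintype_card]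
  rw [Finset.prod_pow_eq_pow_sum, ← Finset.sum_filter, hIic, Finset.sum_const, smul_eq_mul]

theorem ncard_isHermite_and_natDegree_det_eq [Fintype F] (n t : ℕ) :
    {H : Matrix (Fin n) (Fin n) F[X] | IsHermite H ∧ H.det.natDegree = t}.ncard =
      ∑ f ∈ Finset.Nat.antidiagonalTuple n t,
        Fintype.card F ^ ∑ i : Fin n, ((i : ℕ) + 1) * f i := by
  let diagDegree (H : Matrix (Fin n) (Fin n) F[X]) (i : Fin n) : ℕ := (H i i).natDegree
  let S : Set (Matrix (Fin n) (Fin n) F[X]) := {H | IsHermite H ∧ H.det.natDegree = t}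
  have hfiber : ∀ f ∈ Finset.Nat.antidiagonalTuple n t,
      {H ∈ S | diagDegree H = f}.ncard = Fintype.card F ^ ∑ i : Fin n, ((i : ℕ) + 1) * f i := by
    intro f hf
    simp only [← Fin.card_Iic]
    rw [← ncard_isHermite_and_natDegree_eq]
    congr 1
    ext H
    refine ⟨fun ⟨⟨hH, _⟩, hHf⟩ => ⟨hH, congrFun hHf⟩, fun ⟨hH, hHf⟩ => ⟨⟨hH, ?_⟩, funext hHf⟩⟩
    rw [hH.natDegree_det, Finset.sum_congr rfl fun i _ => hHf i,
      Finset.Nat.mem_antidiagonalTuple.mp hf]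
  have hmaps : Set.MapsTo diagDegree S (Finset.Nat.antidiagonalTuple n t) := by
    rintro H ⟨hH, hHt⟩
    rw [Finset.mem_coe, Finset.Nat.mem_antidiagonalTuple, ← hHt, hH.natDegree_det]
  rw [← Finset.sum_congr rfl hfiber]
  refine ncard_eq_sum_ncard_fiberwise hmaps fun f hf => Set.finite_of_ncard_ne_zero ?_
  rw [hfiber f hf]
  exact pow_ne_zero _ Fintype.card_ne_zero

end HermiteCount

section Factorisation

variable {F : Type*} [Field F] {n t k : ℕ} {H : Matrix (Fin n) (Fin n) F[X]}

variable (F n t k) in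
/-- The factorisations `(H, U)` of matrices of degree at most `k` as a matrix `H` in Hermite normal
form, with determinant of degree `t`, times a unimodular matrix `U`. -/
def hermiteFactorisations : Set (Matrix (Fin n) (Fin n) F[X] × Matrix (Fin n) (Fin n) F[X]) :=
  {p | (IsHermite p.1 ∧ p.1.det.natDegree = t) ∧
    IsUnit p.2 ∧ ColDegreeLE (fun _ => k) (p.1 * p.2)}

theorem bijOn_mul_hermiteFactorisations :
    Set.BijOn (fun p => p.1 * p.2) (hermiteFactorisations F n t k)
      {X : Matrix (Fin n) (Fin n) F[X] |
        X.det ≠ 0 ∧ X.det.natDegree = t ∧ ∀ i j, (X i j).degree ≤ (k : ℕ)} := by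
  have hsub : hermiteFactorisations F n t k ⊆ {p | IsHermite p.1 ∧ IsUnit p.2} :=
    fun _ hp => ⟨hp.1.1, hp.2.1⟩
  refine ⟨?_, IsHermite.injOn_mul.mono hsub, ?_⟩
  · rintro ⟨H, U⟩ ⟨⟨hH, hHt⟩, hU, hHU⟩
    refine ⟨?_, ?_, fun i j => natDegree_le_iff_degree_le.mp (hHU i j)⟩
    · rw [det_mul]
      exact mul_ne_zero hH.det_ne_zero ((isUnit_iff_isUnit_det U).mp hU).ne_zero
    · rw [natDegree_det_mul_of_isUnit hH.det_ne_zero hU, hHt]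
  · rintro X ⟨hX, hXt, hXk⟩
    obtain ⟨_, ⟨U, rfl⟩, hH⟩ := exists_isHermite_mul hX
    have hback : X * U.val * U⁻¹.val = X := by
      rw [Matrix.mul_assoc, Units.mul_inv, Matrix.mul_one]
    refine ⟨(X * U.val, U⁻¹.val), ⟨⟨hH, ?_⟩, U⁻¹.isUnit, fun i j => ?_⟩, hback⟩
    · rw [natDegree_det_mul_of_isUnit hX U.isUnit, hXt]
    · rw [hback]
      exact natDegree_le_iff_degree_le.mpr (hXk i j)

theorem hermiteFactorisations_fiber (hH : IsHermite H) :
    {p ∈ hermiteFactorisations F n H.det.natDegree k | p.1 = H} =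
      Prod.mk H '' {U | IsUnit U ∧ ColDegreeLE (fun _ => k) (H * U)} := by
  ext ⟨H', U⟩
  constructor
  · rintro ⟨⟨_, hU⟩, rfl⟩
    exact ⟨U, hU, rfl⟩
  · rintro ⟨U, hU, ⟨⟩⟩
    exact ⟨⟨⟨hH, rfl⟩, hU⟩, rfl⟩

theorem ncard_hermiteFactorisations [Fintype F] (htk : t ≤ k) :
    (hermiteFactorisations F n t k).ncard =
      {H : Matrix (Fin n) (Fin n) F[X] | IsHermite H ∧ H.det.natDegree = t}.ncard *
        (Nat.card (GL (Fin n) F) * Fintype.card F ^ ((n - 1) * (n * k - t))) := by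
  have hS := finite_isHermite_natDegree_det_eq F (Fin n) t
  have hfiber : ∀ H ∈ hS.toFinset, {p ∈ hermiteFactorisations F n t k | p.1 = H}.ncard =
      Nat.card (GL (Fin n) F) * Fintype.card F ^ ((n - 1) * (n * k - t)) := by
    intro H hHS
    obtain ⟨hH, rfl⟩ := hS.mem_toFinset.mp hHS
    rw [hermiteFactorisations_fiber hH,
      Set.ncard_image_of_injective _ (Prod.mk_right_injective H),
      ncard_isUnit_mul_colDegreeLE_const hH.det_ne_zero htk, Fintype.card_fin]
  rw [Set.ncard_eq_toFinset_card _ hS, ← smul_eq_mul, ← Finset.sum_const,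
    ← Finset.sum_congr rfl hfiber]
  refine ncard_eq_sum_ncard_fiberwise (fun p hp => hS.mem_toFinset.mpr hp.1) fun H hH =>
    Set.finite_of_ncard_ne_zero ?_
  rw [hfiber H hH]
  exact mul_ne_zero Nat.card_pos.ne' (pow_ne_zero _ Fintype.card_ne_zero)

end Factorisation

end PolyMatrix

/-- The number of `n × n` matrices over `F[x]` with nonzero determinant of
degree `t` and all entries of degree at most `k` (for `k ≥ t`) equals
`c_{n,t} · #GL_n(F) · q^((n-1)(nk - t))`, where
`c_{n,t} = Σ_{t₁+⋯+tₙ = t} q^{t₁ + 2 t₂ + ⋯ + n tₙ}`. -/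
theorem stmt_1 (F : Type*) [Field F] [Fintype F] (q : ℕ) (hq : Fintype.card F = q)
    (n t : ℕ) (hn : 1 ≤ n) (k : ℕ) (hk : t ≤ k) :
    {X : Matrix (Fin n) (Fin n) F[X] |
        X.det ≠ 0 ∧ X.det.natDegree = t ∧ ∀ i j, (X i j).degree ≤ (k : ℕ)}.ncard
      = (∑ f ∈ Finset.Nat.antidiagonalTuple n t, q ^ (∑ i : Fin n, ((i : ℕ) + 1) * f i)) *
        Nat.card (GL (Fin n) F) * q ^ ((n - 1) * (n * k - t)) := by
  subst hq
  rw [← PolyMatrix.bijOn_mul_hermiteFactorisations.ncard_eq,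
    PolyMatrix.ncard_hermiteFactorisations hk, PolyMatrix.ncard_isHermite_and_natDegree_det_eq,
    mul_assoc]
end

section
/- Let F be a finite field with q elements and let k_1, …, k_n be natural numbers. Then the number of matrices A = (a_{i,j}) ∈ GL_n(F[x]) such that deg(a_{i,j}) ≤ k_j for all 1 ≤ i, j ≤ n and whose constant-term matrix A(0) equals the identity matrix I_n is exactly q^{(n-1)(k_1 + k_2 + ⋯ + k_n)}. -/
open Polynomial Matrix

/-!
A matrix with constant term `1` and column degrees at most `k j` is `1 - X • Y`, where each row of
`Y` is a vector of the state space `V = ∏ j, F[X]_{< k j}`. Let `T` be the backward shift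
`z ↦ (z - z(0)) / X` on `V`, and let `S = T + ∑ l, φ l (·) • y l` be its perturbation by the rows
`y l` of `Y`, the functional `φ l` being the constant coefficient of the `l`-th entry. Modulo the
row span of `1 - X • Y`, multiplication by `X` inverts `S`, so `1 - X • Y` is invertible over `F[X]`
if and only if `S` is nilpotent.

The nilpotent perturbations are counted by adding one rank one term at a time. If `P` is
`T`-invariant and `T` is nilpotent on the largest invariant subspace `U` of `P ⊓ ker φ`, then the
`p ∈ P` for which `T + φ(·) • p` is nilpotent on `P` form a coset of `U`. Weighting each
endomorphism by the size of the invariant subspace on which it is nilpotent, this turns a sum over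
perturbations into `|V|` times a weight with `K` replaced by `K ⊓ ker φ`. Since the constant
coefficients separate the `T`-orbits, `|V|` times the number of nilpotent `S` is `|V| ^ n`.
-/

section MaxInvariant

variable {R V : Type*} [CommRing R] [AddCommGroup V] [Module R V] {S T : Module.End R V}
  {K L P : Submodule R V}

/-- The largest `T`-invariant submodule of `K`. For `K = ker φ` this is the unobservable subspace
of the linear system with state operator `T` and output `φ`. -/
def maxInvariant (T : Module.End R V) (K : Submodule R V) : Submodule R V :=
  ⨅ i : ℕ, K.comap (T ^ i)

theorem mem_maxInvariant {z : V} : z ∈ maxInvariant T K ↔ ∀ i : ℕ, (T ^ i) z ∈ K := by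
  simp only [maxInvariant, Submodule.mem_iInf, Submodule.mem_comap]

theorem maxInvariant_le : maxInvariant T K ≤ K := fun _ hz => mem_maxInvariant.1 hz 0

theorem maxInvariant_mem_invtSubmodule : maxInvariant T K ∈ T.invtSubmodule := fun z hz =>
  mem_maxInvariant.2 fun i => by
    simpa only [pow_succ, Module.End.mul_apply] using mem_maxInvariant.1 hz (i + 1)

theorem le_maxInvariant (hP : P ∈ T.invtSubmodule) (hPK : P ≤ K) : P ≤ maxInvariant T K :=
  fun _ hz => mem_maxInvariant.2 fun i => hPK (P.le_comap_pow_of_le_comap hP i hz)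

theorem maxInvariant_mono (h : K ≤ L) : maxInvariant T K ≤ maxInvariant T L :=
  le_maxInvariant maxInvariant_mem_invtSubmodule (maxInvariant_le.trans h)

theorem maxInvariant_maxInvariant_inf :
    maxInvariant T (maxInvariant T K ⊓ L) = maxInvariant T (K ⊓ L) :=
  le_antisymm (maxInvariant_mono (inf_le_inf_right L maxInvariant_le)) <|
    le_maxInvariant maxInvariant_mem_invtSubmodule <|
      le_inf (maxInvariant_mono inf_le_left) (maxInvariant_le.trans inf_le_right)

theorem maxInvariant_top : maxInvariant T ⊤ = ⊤ :=
  top_le_iff.1 (le_maxInvariant (Module.End.invtSubmodule.top_mem T) le_rfl)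

theorem pow_apply_eq_of_eqOn (h : Set.EqOn S T K) {z : V} {m : ℕ}
    (hz : ∀ i < m, (T ^ i) z ∈ K) : (S ^ m) z = (T ^ m) z := by
  induction m with
  | zero => rfl
  | succ m ih =>
    rw [pow_succ', pow_succ', Module.End.mul_apply, Module.End.mul_apply,
      ih fun i hi => hz i (hi.trans m.lt_succ_self), h (hz m m.lt_succ_self)]

theorem maxInvariant_congr (h : Set.EqOn S T K) : maxInvariant S K = maxInvariant T K := by
  have le_of_eqOn {S T : Module.End R V} (h : Set.EqOn S T K) :
      maxInvariant T K ≤ maxInvariant S K := fun z hz => mem_maxInvariant.2 fun i => by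
    rw [pow_apply_eq_of_eqOn h fun i _ => mem_maxInvariant.1 hz i]
    exact mem_maxInvariant.1 hz i
  exact le_antisymm (le_of_eqOn h.symm) (le_of_eqOn h)

theorem maxInvariant_eq_of_sub_mem (h : ∀ z, S z - T z ∈ maxInvariant T K) :
    maxInvariant S K = maxInvariant T K := by
  have le_of_sub_mem {S T : Module.End R V} (h : ∀ z, S z - T z ∈ maxInvariant T K) :
      maxInvariant T K ≤ maxInvariant S K := by
    refine le_maxInvariant (fun z hz => ?_) maxInvariant_le
    simpa using add_mem (h z) (maxInvariant_mem_invtSubmodule hz)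
  refine le_antisymm (le_of_sub_mem fun z => le_of_sub_mem h ?_) (le_of_sub_mem h)
  simpa using neg_mem (h z)

theorem mem_maxGenEigenspace_zero {z : V} :
    z ∈ T.maxGenEigenspace 0 ↔ ∃ m : ℕ, (T ^ m) z = 0 := by
  rw [Module.End.mem_maxGenEigenspace, zero_smul, sub_zero]

theorem maxGenEigenspace_zero_eq_top_iff [Module.Finite R V] :
    T.maxGenEigenspace 0 = ⊤ ↔ IsNilpotent T := by
  simp only [Submodule.eq_top_iff', mem_maxGenEigenspace_zero,
    Module.End.isNilpotent_iff_of_finite]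

theorem maxInvariant_le_maxGenEigenspace_zero_congr (h : Set.EqOn S T K) :
    maxInvariant S K ≤ S.maxGenEigenspace 0 ↔ maxInvariant T K ≤ T.maxGenEigenspace 0 := by
  rw [maxInvariant_congr h]
  refine forall₂_congr fun z hz => ?_
  have pow_eq (m : ℕ) : (S ^ m) z = (T ^ m) z :=
    pow_apply_eq_of_eqOn h fun i _ => mem_maxInvariant.1 hz i
  simp only [mem_maxGenEigenspace_zero, pow_eq]

theorem mem_maxGenEigenspace_zero_of_pow_mem {m : ℕ} {z : V}
    (h : (T ^ m) z ∈ T.maxGenEigenspace 0) : z ∈ T.maxGenEigenspace 0 := by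
  obtain ⟨l, hl⟩ := mem_maxGenEigenspace_zero.1 h
  exact mem_maxGenEigenspace_zero.2 ⟨l + m, by rw [pow_add, Module.End.mul_apply, hl]⟩

/-- The number of vectors of the largest `T`-invariant submodule of `K` if `T` is locally nilpotent
on it, and `0` otherwise. Summing it over a family of endomorphisms counts the nilpotent ones with
weights that make an induction on `K` possible. -/
noncomputable def nilWeight (T : Module.End R V) (K : Submodule R V) : ℕ :=
  {u | u ∈ maxInvariant T K ∧ maxInvariant T K ≤ T.maxGenEigenspace 0}.ncard

theorem nilWeight_congr (h : Set.EqOn S T K) : nilWeight S K = nilWeight T K := by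
  rw [nilWeight, maxInvariant_le_maxGenEigenspace_zero_congr h, maxInvariant_congr h, nilWeight]

theorem nilWeight_maxInvariant_inf :
    nilWeight T (maxInvariant T K ⊓ L) = nilWeight T (K ⊓ L) := by
  simp only [nilWeight, maxInvariant_maxInvariant_inf]

theorem nilWeight_of_maxInvariant_eq_bot (h : maxInvariant T K = ⊥) : nilWeight T K = 1 := by
  simp [nilWeight, h]

theorem nilWeight_top [Module.Finite R V] (h : IsNilpotent T) : nilWeight T ⊤ = Nat.card V := by
  simp [nilWeight, maxInvariant_top, maxGenEigenspace_zero_eq_top_iff.2 h, Set.ncard_univ]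

theorem nilWeight_top_of_not [Module.Finite R V] (h : ¬ IsNilpotent T) : nilWeight T ⊤ = 0 := by
  simp [nilWeight, maxInvariant_top, maxGenEigenspace_zero_eq_top_iff, h]

end MaxInvariant

section RankOnePerturbation

variable {R V : Type*} [CommRing R] [AddCommGroup V] [Module R V] {T : Module.End R V}
  {φ : V →ₗ[R] R} {K P U : Submodule R V}

theorem add_smulRight_add_smulRight (T : Module.End R V) (φ : V →ₗ[R] R) (y y' : V) :
    T + φ.smulRight y + φ.smulRight y' = T + φ.smulRight (y + y') := by
  ext z
  simp [add_assoc]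

theorem eqOn_add_smulRight_inf_ker (T : Module.End R V) (φ : V →ₗ[R] R) (y : V)
    (K : Submodule R V) :
    Set.EqOn (T + φ.smulRight y : Module.End R V) T (K ⊓ LinearMap.ker φ : Submodule R V) := by
  rintro z ⟨-, hz⟩
  simp [LinearMap.mem_ker.1 hz]

theorem pow_add_smulRight_apply {y z : V} {m : ℕ} (hz : ∀ i < m, φ ((T ^ i) z) = 0) :
    ((T + φ.smulRight y) ^ m) z = (T ^ m) z :=
  pow_apply_eq_of_eqOn (eqOn_add_smulRight_inf_ker T φ y ⊤) fun i hi => ⟨trivial, hz i hi⟩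

theorem maxInvariant_add_smulRight {p : V} (hp : p ∈ maxInvariant T K) :
    maxInvariant (T + φ.smulRight p) K = maxInvariant T K :=
  maxInvariant_eq_of_sub_mem fun z => by simpa using Submodule.smul_mem _ (φ z) hp

theorem mem_maxInvariant_add_smulRight_iff {p : V} :
    p ∈ maxInvariant (T + φ.smulRight p) K ↔ p ∈ maxInvariant T K := by
  refine ⟨fun hp => ?_, fun hp => by rwa [maxInvariant_add_smulRight hp]⟩
  have h := maxInvariant_add_smulRight (φ := φ) (neg_mem hp)
  rw [add_smulRight_add_smulRight, add_neg_cancel, LinearMap.smulRight_zero, add_zero] at h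
  rwa [h]

theorem exists_natDegree_le_sub_aeval_apply_mem (hP : P ∈ T.invtSubmodule) {e : ℕ} {v : V}
    (hv : v ∈ P) (hφv : ∀ i ≤ e, φ ((T ^ i) v) = if i = e then 1 else 0)
    (hU : ∀ z ∈ P, (∀ i ≤ e, φ ((T ^ i) z) = 0) → z ∈ U) {z : V} (hz : z ∈ P) :
    ∃ f : R[X], f.natDegree ≤ e ∧ z - aeval T f v ∈ U := by
  have approx (m : ℕ) (hm : m ≤ e + 1) : ∃ f : R[X], f.natDegree ≤ e ∧
      ∀ i < m, φ ((T ^ i) (z - aeval T f v)) = 0 := by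
    induction m with
    | zero => exact ⟨0, by simp⟩
    | succ m ih =>
      obtain ⟨f, hf, hfm⟩ := ih (by omega)
      set w := z - aeval T f v with hw
      refine ⟨f + C (φ ((T ^ m) w)) * X ^ (e - m), natDegree_add_le_of_degree_le hf <|
        (natDegree_C_mul_X_pow_le _ _).trans (Nat.sub_le e m), fun i hi => ?_⟩
      have sub_eq : z - aeval T (f + C (φ ((T ^ m) w)) * X ^ (e - m)) v =
          w - φ ((T ^ m) w) • (T ^ (e - m)) v := by
        rw [map_add, LinearMap.add_apply, ← sub_sub, ← hw, map_mul, aeval_C, map_pow, aeval_X,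
          Module.End.mul_apply, Module.algebraMap_end_apply]
      rw [sub_eq, map_sub, map_sub, map_smul, map_smul, smul_eq_mul, ← Module.End.mul_apply,
        ← pow_add, hφv _ (by omega)]
      rcases Nat.lt_succ_iff_lt_or_eq.1 hi with hi | rfl
      · rw [hfm i hi, if_neg (by omega), mul_zero, sub_zero]
      · rw [if_pos (by omega), mul_one, sub_self]
  obtain ⟨f, hf, hfm⟩ := approx (e + 1) le_rfl
  exact ⟨f, hf, hU _ (sub_mem hz (aeval_apply_smul_mem_of_le_comap hv f T hP)) fun i hi =>
    hfm i (Nat.lt_succ_iff.2 hi)⟩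

theorem exists_forall_apply_pow_eq_zero [Module.Finite R V] [Module.Free R V]
    (T : Module.End R V) (φ : V →ₗ[R] R) :
    ∃ d : ℕ, ∀ z, (∀ i < d, φ ((T ^ i) z) = 0) → ∀ i, φ ((T ^ i) z) = 0 := by
  nontriviality R
  refine ⟨T.charpoly.natDegree + 1, fun z hz i => ?_⟩
  rw [LinearMap.pow_eq_aeval_mod_charpoly, aeval_eq_sum_range'
    (Nat.lt_succ_iff.2 (natDegree_modByMonic_le _ T.charpoly_monic)), LinearMap.sum_apply, map_sum]
  refine Finset.sum_eq_zero fun j hj => ?_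
  rw [LinearMap.smul_apply, map_smul, hz j (Finset.mem_range.1 hj), smul_zero]

end RankOnePerturbation

section NilpotentPerturbation

variable {F V : Type*} [Field F] [AddCommGroup V] [Module F V] {T : Module.End F V}
  {φ : V →ₗ[F] F} {P U : Submodule F V}

-- The gcd of `f` and `X ^ m` is some `X ^ e` with `e ≤ deg f`, and it maps `v` into `U` as well.
theorem pow_natDegree_apply_mem (hU : U ∈ T.invtSubmodule) {f : F[X]} (hf : f ≠ 0) {m : ℕ} {v : V}
    (hfv : aeval T f v ∈ U) (hv : (T ^ m) v ∈ U) : (T ^ f.natDegree) v ∈ U := by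
  obtain ⟨g, f_eq, hg⟩ := exists_eq_pow_rootMultiplicity_mul_and_not_dvd f hf 0
  set e := f.rootMultiplicity 0
  rw [C_0, sub_zero] at f_eq hg
  obtain ⟨a, b, hab⟩ : IsCoprime g (X ^ m) :=
    ((irreducible_X.coprime_iff_not_dvd).2 hg).symm.pow_right
  have X_pow_eq : (X ^ e : F[X]) = a * f + X ^ e * b * X ^ m := by
    linear_combination (-X ^ e : F[X]) * hab - a * f_eq
  have pow_mem : (T ^ e) v ∈ U := by
    have h := LinearMap.congr_fun (congrArg (aeval T) X_pow_eq) v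
    simp only [map_add, map_mul _ _ (X ^ m), map_mul _ a, map_pow, aeval_X, LinearMap.add_apply,
      Module.End.mul_apply] at h
    rw [h]
    exact add_mem (aeval_apply_smul_mem_of_le_comap hfv a T hU)
      (aeval_apply_smul_mem_of_le_comap hv (X ^ e * b) T hU)
  have e_le : e ≤ f.natDegree := by
    simpa using natDegree_le_of_dvd (Dvd.intro g f_eq.symm) hf
  rw [← Nat.sub_add_cancel e_le, pow_add]
  exact U.le_comap_pow_of_le_comap hU _ pow_mem

-- The class of `v` generates `P ⧸ U` with relations of degree `e + 1`, so the nilpotency of `T` on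
-- the quotient can be read off from `T ^ (e + 1)` at `v`.
theorem le_maxGenEigenspace_zero_iff_pow_apply_mem (hP : P ∈ T.invtSubmodule)
    (hUT : U ∈ T.invtSubmodule) (hn : U ≤ T.maxGenEigenspace 0) {e : ℕ} {v : V} (hv : v ∈ P)
    (hφv : ∀ i ≤ e, φ ((T ^ i) v) = if i = e then 1 else 0)
    (hU : ∀ z ∈ P, (∀ i ≤ e, φ ((T ^ i) z) = 0) → z ∈ U) :
    P ≤ T.maxGenEigenspace 0 ↔ (T ^ (e + 1)) v ∈ U := by
  constructor
  · intro hPn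
    obtain ⟨m, hm⟩ := mem_maxGenEigenspace_zero.1 (hPn hv)
    obtain ⟨f, hf, hfv⟩ := exists_natDegree_le_sub_aeval_apply_mem hP hv hφv hU
      (P.le_comap_pow_of_le_comap hP (e + 1) hv)
    have natDegree_eq : (X ^ (e + 1) - f).natDegree = e + 1 := by
      rw [natDegree_sub_eq_left_of_natDegree_lt] <;> rw [natDegree_X_pow]
      exact Nat.lt_succ_iff.2 hf
    rw [← natDegree_eq]
    refine pow_natDegree_apply_mem hUT (ne_zero_of_natDegree_gt (n := e) ?_) ?_ (hm ▸ U.zero_mem)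
    · rw [natDegree_eq]
      exact e.lt_succ_self
    · simpa using hfv
  · intro hvU z hz
    obtain ⟨f, -, hfz⟩ := exists_natDegree_le_sub_aeval_apply_mem hP hv hφv hU hz
    have v_mem : v ∈ T.maxGenEigenspace 0 := mem_maxGenEigenspace_zero_of_pow_mem (hn hvU)
    rw [← sub_add_cancel z (aeval T f v)]
    refine add_mem (hn hfz) (aeval_apply_smul_mem_of_le_comap v_mem f T ?_)
    exact Module.End.mapsTo_maxGenEigenspace_of_comm rfl 0

theorem exists_apply_pow_eq_ite [FiniteDimensional F V] (T : Module.End F V) (φ : V →ₗ[F] F)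
    (hP : P ∈ T.invtSubmodule) (h : ¬ P ≤ maxInvariant T (P ⊓ LinearMap.ker φ)) :
    ∃ e : ℕ, ∃ v ∈ P, (∀ i ≤ e, φ ((T ^ i) v) = if i = e then 1 else 0) ∧
      ∀ z ∈ P, (∀ i ≤ e, φ ((T ^ i) z) = 0) → z ∈ maxInvariant T (P ⊓ LinearMap.ker φ) := by
  classical
  have exists_length : ∃ d, ∀ z ∈ P, (∀ i < d, φ ((T ^ i) z) = 0) →
      z ∈ maxInvariant T (P ⊓ LinearMap.ker φ) := by
    obtain ⟨d, hd⟩ := exists_forall_apply_pow_eq_zero T φ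
    exact ⟨d, fun z hz hφz => mem_maxInvariant.2 fun i =>
      ⟨P.le_comap_pow_of_le_comap hP i hz, hd z hφz i⟩⟩
  obtain ⟨e, he⟩ : ∃ e, Nat.find exists_length = e + 1 := Nat.exists_eq_succ_of_ne_zero fun h0 =>
    h fun z hz => (Nat.find_eq_zero exists_length).1 h0 z hz (by simp)
  have find_spec := Nat.find_spec exists_length
  have find_min := Nat.find_min exists_length (m := e) (by omega)
  simp only [he, Nat.lt_succ_iff] at find_spec
  push Not at find_min
  obtain ⟨z, hz, hφz, hzU⟩ := find_min
  have φz_ne : φ ((T ^ e) z) ≠ 0 := fun h0 => hzU <| find_spec z hz fun i hi => by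
    rcases hi.lt_or_eq with hi | rfl
    exacts [hφz i hi, h0]
  refine ⟨e, (φ ((T ^ e) z))⁻¹ • z, P.smul_mem _ hz, fun i hi => ?_, find_spec⟩
  rcases hi.lt_or_eq with hi | rfl
  · rw [map_smul, map_smul, hφz i hi, smul_zero, if_neg hi.ne]
  · rw [map_smul, map_smul, smul_eq_mul, inv_mul_cancel₀ φz_ne, if_pos rfl]

theorem exists_le_maxGenEigenspace_zero_add_smulRight_iff [FiniteDimensional F V]
    (hP : P ∈ T.invtSubmodule)
    (hn : maxInvariant T (P ⊓ LinearMap.ker φ) ≤ T.maxGenEigenspace 0) :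
    ∃ p₀ ∈ P, ∀ p ∈ P, P ≤ (T + φ.smulRight p).maxGenEigenspace 0 ↔
      p - p₀ ∈ maxInvariant T (P ⊓ LinearMap.ker φ) := by
  have eqOn p := eqOn_add_smulRight_inf_ker T φ p P
  have hn' p := (maxInvariant_le_maxGenEigenspace_zero_congr (eqOn p)).2 hn
  by_cases hPU : P ≤ maxInvariant T (P ⊓ LinearMap.ker φ)
  · refine ⟨0, P.zero_mem, fun p hp => iff_of_true ?_ (by simpa using hPU hp)⟩
    exact (hPU.trans (maxInvariant_congr (eqOn p)).ge).trans (hn' p)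
  obtain ⟨e, v, hv, hφv, hU⟩ := exists_apply_pow_eq_ite T φ hP hPU
  refine ⟨-(T ^ (e + 1)) v, neg_mem (P.le_comap_pow_of_le_comap hP _ hv), fun p hp => ?_⟩
  set S := T + φ.smulRight p with hS
  -- The output at `v` vanishes before time `e`, so the perturbation is felt only in the last step.
  have pow_v {i : ℕ} (hi : i ≤ e) : (S ^ i) v = (T ^ i) v :=
    pow_add_smulRight_apply fun j hj => by rw [hφv j (by omega), if_neg (by omega)]
  have pow_succ_v : (S ^ (e + 1)) v = p - -(T ^ (e + 1)) v := by
    rw [pow_succ', Module.End.mul_apply, pow_v le_rfl, hS, LinearMap.add_apply,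
      LinearMap.smulRight_apply, hφv e le_rfl, if_pos rfl, one_smul, ← Module.End.mul_apply,
      ← pow_succ', sub_neg_eq_add, add_comm]
  have T_eq : T = S + φ.smulRight (-p) := by simp [hS, add_smulRight_add_smulRight]
  rw [← pow_succ_v, ← maxInvariant_congr (eqOn p)]
  refine le_maxGenEigenspace_zero_iff_pow_apply_mem (φ := φ) (fun z hz => ?_)
    maxInvariant_mem_invtSubmodule (hn' p) hv (fun i hi => by rw [pow_v hi, hφv i hi])
    fun z hz hφz => ?_
  · exact add_mem (show T z ∈ P from hP hz) (P.smul_mem (φ z) hp)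
  · rw [maxInvariant_congr (eqOn p)]
    refine hU z hz fun i hi => ?_
    rw [T_eq, pow_add_smulRight_apply fun j hj => hφz j (by omega), hφz i hi]

theorem ncard_setOf_mem_and_le_maxGenEigenspace_zero [FiniteDimensional F V] (φ : V →ₗ[F] F)
    (hP : P ∈ T.invtSubmodule) :
    {p | p ∈ P ∧ P ≤ (T + φ.smulRight p).maxGenEigenspace 0}.ncard =
      nilWeight T (P ⊓ LinearMap.ker φ) := by
  by_cases hn : maxInvariant T (P ⊓ LinearMap.ker φ) ≤ T.maxGenEigenspace 0
  · obtain ⟨p₀, hp₀, h⟩ := exists_le_maxGenEigenspace_zero_add_smulRight_iff hP hn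
    have coset_eq : {p | p ∈ P ∧ P ≤ (T + φ.smulRight p).maxGenEigenspace 0} =
        (p₀ + ·) '' (maxInvariant T (P ⊓ LinearMap.ker φ) : Set V) := by
      ext p
      constructor
      · exact fun ⟨hp, hpn⟩ => ⟨p - p₀, (h p hp).1 hpn, add_sub_cancel p₀ p⟩
      · rintro ⟨u, hu, rfl⟩
        have hp : p₀ + u ∈ P := add_mem hp₀ (maxInvariant_le hu).1
        exact ⟨hp, (h _ hp).2 (by rwa [add_sub_cancel_left])⟩
    simp only [coset_eq, Set.ncard_image_of_injective _ (add_right_injective p₀), nilWeight, hn,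
      and_true]
    rfl
  · have not_le (p : V) : ¬ P ≤ (T + φ.smulRight p).maxGenEigenspace 0 := fun hp =>
      hn <| (maxInvariant_le_maxGenEigenspace_zero_congr (eqOn_add_smulRight_inf_ker T φ p P)).1 <|
        (maxInvariant_le.trans inf_le_left).trans hp
    simp only [nilWeight, hn, not_le, and_false]

theorem sum_ncard_setOf_eq_sum_ncard_setOf_add {G : Type*} [AddGroup G] [Fintype G]
    (r : G → G → Prop) : ∑ y, {u | r y u}.ncard = ∑ y, {u | r (y + u) u}.ncard := by
  classical
  simp only [Set.ncard_eq_toFinset_card', Set.toFinset_ofPred, Finset.card_filter]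
  rw [Finset.sum_comm, Finset.sum_comm (f := fun y u => if r (y + u) u then 1 else 0)]
  exact Finset.sum_congr rfl fun u _ =>
    (Equiv.sum_comp (Equiv.addRight u) fun y => if r y u then 1 else 0).symm

theorem sum_nilWeight_add_smulRight [Fintype V] (T : Module.End F V) (φ : V →ₗ[F] F)
    (K : Submodule F V) :
    ∑ y, nilWeight (T + φ.smulRight y) K =
      Fintype.card V * nilWeight T (K ⊓ LinearMap.ker φ) := by
  -- Translating `y` by `p` keeps the invariant submodule if it contains `p`, so after the shear
  -- `(y, p) ↦ (y + p, p)` the pairs over each `y` are counted by the previous coset argument.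
  have shear (y p : V) :
      (p ∈ maxInvariant (T + φ.smulRight (y + p)) K ∧ maxInvariant (T + φ.smulRight (y + p)) K ≤
        (T + φ.smulRight (y + p)).maxGenEigenspace 0) ↔
      (p ∈ maxInvariant (T + φ.smulRight y) K ∧ maxInvariant (T + φ.smulRight y) K ≤
        (T + φ.smulRight y + φ.smulRight p).maxGenEigenspace 0) := by
    rw [← add_smulRight_add_smulRight, mem_maxInvariant_add_smulRight_iff]
    exact and_congr_right fun hp => by rw [maxInvariant_add_smulRight hp]
  have fiber (y : V) : {p | p ∈ maxInvariant (T + φ.smulRight y) K ∧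
      maxInvariant (T + φ.smulRight y) K ≤
        (T + φ.smulRight y + φ.smulRight p).maxGenEigenspace 0}.ncard =
      nilWeight T (K ⊓ LinearMap.ker φ) := by
    rw [ncard_setOf_mem_and_le_maxGenEigenspace_zero φ maxInvariant_mem_invtSubmodule,
      nilWeight_maxInvariant_inf, nilWeight_congr (eqOn_add_smulRight_inf_ker T φ y K)]
  simp only [nilWeight]
  rw [sum_ncard_setOf_eq_sum_ncard_setOf_add]
  simp only [shear, fiber, Finset.sum_const, Finset.card_univ, smul_eq_mul]
  rfl

theorem sum_nilWeight_add_sum_smulRight [Fintype V] (T : Module.End F V) {n : ℕ}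
    (φ : Fin n → V →ₗ[F] F) (K : Submodule F V) :
    ∑ y : Fin n → V, nilWeight (T + ∑ l, (φ l).smulRight (y l)) K =
      Fintype.card V ^ n * nilWeight T (K ⊓ ⨅ l, LinearMap.ker (φ l)) := by
  induction n generalizing K with
  | zero => simp
  | succ n ih =>
    rw [← (Fin.consEquiv fun _ => V).sum_comp, Fintype.sum_prod_type_right]
    have sum_head (y : Fin n → V) : ∑ y₀, nilWeight (T + ∑ l, (φ l).smulRight
        ((Fin.consEquiv fun _ => V) (y₀, y) l)) K = Fintype.card V *
          nilWeight (T + ∑ l : Fin n, (φ l.succ).smulRight (y l)) (K ⊓ LinearMap.ker (φ 0)) := by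
      rw [← sum_nilWeight_add_smulRight]
      refine Finset.sum_congr rfl fun y₀ _ => ?_
      rw [Fin.sum_univ_succ, ← add_assoc, add_right_comm]
      rfl
    have iInf_succ : ⨅ l, LinearMap.ker (φ l) =
        LinearMap.ker (φ 0) ⊓ ⨅ l : Fin n, LinearMap.ker (φ l.succ) := by
      ext z
      simp [Submodule.mem_iInf, Fin.forall_fin_succ]
    simp only [sum_head]
    rw [← Finset.mul_sum, ih, iInf_succ, inf_assoc, pow_succ', mul_assoc]

theorem ncard_isNilpotent_add_sum_smulRight_mul_card [Fintype V] (T : Module.End F V) {n : ℕ}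
    (φ : Fin n → V →ₗ[F] F) (h : maxInvariant T (⨅ l, LinearMap.ker (φ l)) = ⊥) :
    {y : Fin n → V | IsNilpotent (T + ∑ l, (φ l).smulRight (y l))}.ncard * Fintype.card V =
      Fintype.card V ^ n := by
  classical
  have sum_eq := sum_nilWeight_add_sum_smulRight T φ ⊤
  have weight_eq (S : Module.End F V) :
      nilWeight S ⊤ = if IsNilpotent S then Fintype.card V else 0 := by
    split_ifs with hS
    · rw [nilWeight_top hS, Nat.card_eq_fintype_card]
    · exact nilWeight_top_of_not hS
  rw [top_inf_eq, nilWeight_of_maxInvariant_eq_bot h, mul_one] at sum_eq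
  rw [← sum_eq, Set.ncard_eq_toFinset_card', Set.toFinset_ofPred]
  simp only [weight_eq, ← Finset.sum_filter, Finset.sum_const, smul_eq_mul]

end NilpotentPerturbation

section StateSpace

variable {R ι : Type*} [CommRing R] {k : ι → ℕ}

theorem divX_mem_degreeLT {p : R[X]} {n : ℕ} (hp : p ∈ degreeLT R n) : p.divX ∈ degreeLT R n := by
  rw [mem_degreeLT, degree_lt_iff_coeff_zero] at hp ⊢
  exact fun m hm => by rw [coeff_divX, hp (m + 1) (hm.trans m.le_succ)]

/-- Division by `X`, dropping the constant coefficient, on vectors of polynomials of bounded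
degree. -/
@[simps]
noncomputable def backwardShift (k : ι → ℕ) : Module.End R (∀ j, degreeLT R (k j)) where
  toFun z j := ⟨(z j : R[X]).divX, divX_mem_degreeLT (z j).2⟩
  map_add' _ _ := by
    ext j : 2
    exact divX_add
  map_smul' a z := by
    ext j : 3
    simp [coeff_divX]

/-- The constant coefficient of the `l`-th entry of a vector of polynomials. -/
@[simps!]
noncomputable def constCoeff (k : ι → ℕ) (l : ι) : (∀ j, degreeLT R (k j)) →ₗ[R] R :=
  lcoeff R 0 ∘ₗ (degreeLT R (k l)).subtype ∘ₗ LinearMap.proj l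

theorem constCoeff_backwardShift_pow (l : ι) (z : ∀ j, degreeLT R (k j)) (i : ℕ) :
    constCoeff k l ((backwardShift k ^ i) z) = (z l : R[X]).coeff i := by
  induction i generalizing z with
  | zero => rfl
  | succ i ih => simp [pow_succ, ih, coeff_divX]

theorem maxInvariant_backwardShift :
    maxInvariant (backwardShift k) (⨅ l, LinearMap.ker (constCoeff (R := R) k l)) = ⊥ := by
  refine (Submodule.eq_bot_iff _).2 fun z hz => ?_
  ext l i
  rw [← constCoeff_backwardShift_pow]
  exact LinearMap.mem_ker.1 ((Submodule.mem_iInf _).1 (mem_maxInvariant.1 hz i) l)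

variable [DecidableEq ι]

/-- The polynomial matrix `1 - X • Y`, where `Y` has the rows `y l`. -/
noncomputable def oneSubXMul (y : ι → ∀ j, degreeLT R (k j)) : Matrix ι ι R[X] :=
  1 - (X : R[X]) • of fun l j => (y l j : R[X])

theorem coeff_zero_oneSubXMul (y : ι → ∀ j, degreeLT R (k j)) (i j : ι) :
    (oneSubXMul y i j).coeff 0 = (1 : Matrix ι ι R) i j := by
  rcases eq_or_ne i j with rfl | hij
  · simp [oneSubXMul]
  · simp [oneSubXMul, hij]

theorem coeff_succ_oneSubXMul (y : ι → ∀ j, degreeLT R (k j)) (i j : ι) (m : ℕ) :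
    (oneSubXMul y i j).coeff (m + 1) = -(y i j : R[X]).coeff m := by
  rcases eq_or_ne i j with rfl | hij
  · simp [oneSubXMul, coeff_one]
  · simp [oneSubXMul, hij]

theorem oneSubXMul_injective :
    Function.Injective (oneSubXMul : (ι → ∀ j, degreeLT R (k j)) → Matrix ι ι R[X]) := by
  intro y y' h
  ext l j m
  rw [← neg_inj, ← coeff_succ_oneSubXMul, h, coeff_succ_oneSubXMul]

theorem mem_range_oneSubXMul_iff {M : Matrix ι ι R[X]} :
    M ∈ Set.range (oneSubXMul (k := k)) ↔
      (∀ i j, (M i j).degree ≤ k j) ∧ M.map (fun p => p.coeff 0) = 1 := by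
  simp only [degree_le_iff_coeff_zero, Nat.cast_lt]
  constructor
  · rintro ⟨y, rfl⟩
    refine ⟨fun i j m hm => ?_, Matrix.ext (coeff_zero_oneSubXMul y)⟩
    obtain ⟨m, rfl⟩ := Nat.exists_eq_add_one_of_ne_zero hm.ne_bot
    rw [coeff_succ_oneSubXMul, neg_eq_zero]
    exact (degree_lt_iff_coeff_zero _ _).1 (mem_degreeLT.1 (y i j).2) m (Nat.lt_succ_iff.1 hm)
  · rintro ⟨hdeg, h0⟩
    have divX_mem (i j : ι) : -(M i j).divX ∈ degreeLT R (k j) := by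
      refine neg_mem (mem_degreeLT.2 ((degree_lt_iff_coeff_zero _ _).2 fun m hm => ?_))
      rw [coeff_divX, hdeg i j (m + 1) (Nat.lt_succ_iff.2 hm)]
    refine ⟨fun i j => ⟨_, divX_mem i j⟩, ?_⟩
    ext i j m
    cases m with
    | zero => rw [coeff_zero_oneSubXMul, ← h0, map_apply]
    | succ m => rw [coeff_succ_oneSubXMul, coeff_neg, neg_neg, coeff_divX]

variable [Fintype ι]

/-- The backward shift with output injection: the state operator whose outputs `constCoeff k l` are
fed back along the vectors `y l`. It is nilpotent exactly when `oneSubXMul y` is invertible. -/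
noncomputable def injectedShift (y : ι → ∀ j, degreeLT R (k j)) :
    Module.End R (∀ j, degreeLT R (k j)) :=
  backwardShift k + ∑ l, (constCoeff k l).smulRight (y l)

theorem X_smul_injectedShift (y : ι → ∀ j, degreeLT R (k j)) (z : ∀ j, degreeLT R (k j)) :
    ((X : R[X]) • fun j => (injectedShift y z j : R[X])) =
      (fun j => (z j : R[X])) - (fun l => C (constCoeff k l z)) ᵥ* oneSubXMul y := by
  ext1 j
  have coe_eq : (injectedShift y z j : R[X]) =
      (z j : R[X]).divX + ∑ l, C (constCoeff k l z) * (y l j : R[X]) := by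
    simp [injectedShift, smul_eq_C_mul]
  have vecMul_eq : ((fun l => C (constCoeff k l z)) ᵥ* oneSubXMul y) j =
      C (constCoeff k j z) - X * ∑ l, C (constCoeff k l z) * (y l j : R[X]) := by
    rw [oneSubXMul, vecMul_sub, vecMul_one, vecMul_smul]
    rfl
  rw [Pi.smul_apply, Pi.sub_apply, coe_eq, vecMul_eq, smul_eq_mul]
  rw [constCoeff_apply]
  linear_combination divX_mul_X_add (z j : R[X])

theorem coeff_vecMul_eq_constCoeff {y : ι → ∀ j, degreeLT R (k j)} {B : Matrix ι ι R[X]}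
    (hB : oneSubXMul y * B = 1) (z : ∀ j, degreeLT R (k j)) (m : ℕ) (l : ι) :
    (((fun j => (z j : R[X])) ᵥ* B) l).coeff m = constCoeff k l ((injectedShift y ^ m) z) := by
  have vecMul_eq (z : ∀ j, degreeLT R (k j)) : ((fun j => (z j : R[X])) ᵥ* B) l =
      X * ((fun j => (injectedShift y z j : R[X])) ᵥ* B) l + C (constCoeff k l z) := by
    have h := congrArg (· ᵥ* B) (X_smul_injectedShift y z)
    simp only [sub_vecMul, smul_vecMul, vecMul_vecMul, hB, vecMul_one] at h
    simpa [sub_eq_iff_eq_add] using (congrFun (sub_eq_iff_eq_add.1 h.symm) l)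
  induction m generalizing z with
  | zero => rw [vecMul_eq, coeff_add, coeff_X_mul_zero, coeff_C_zero, zero_add]; rfl
  | succ m ih =>
    rw [vecMul_eq, coeff_add, coeff_X_mul, coeff_C_succ, add_zero, ih]
    rfl

theorem isNilpotent_injectedShift {y : ι → ∀ j, degreeLT R (k j)} (h : IsUnit (oneSubXMul y)) :
    IsNilpotent (injectedShift y) := by
  obtain ⟨B, hAB, hBA⟩ := isUnit_iff_exists.1 h
  refine Module.End.isNilpotent_iff_of_finite.2 fun z => ?_
  set m := (Finset.univ.sup fun l => (((fun j => (z j : R[X])) ᵥ* B) l).natDegree) + 1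
  have vecMul_eq_zero : (fun j => ((injectedShift y ^ m) z j : R[X])) ᵥ* B = 0 := by
    ext l i
    have lt_m : (((fun j => (z j : R[X])) ᵥ* B) l).natDegree < m :=
      Nat.lt_succ_iff.2 <| Finset.le_sup (f := fun l => natDegree (_ : R[X])) (Finset.mem_univ l)
    rw [coeff_vecMul_eq_constCoeff hAB, ← Module.End.mul_apply, ← pow_add,
      ← coeff_vecMul_eq_constCoeff hAB]
    exact coeff_eq_zero_of_natDegree_lt (lt_m.trans_le (Nat.le_add_left m i))
  refine ⟨m, ?_⟩
  ext1 j
  simpa [vecMul_vecMul, hBA] using congrFun (congrArg (· ᵥ* oneSubXMul y) vecMul_eq_zero) j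

theorem exists_eq_vecMul_of_pow_apply_eq_zero {y : ι → ∀ j, degreeLT R (k j)} {m : ℕ}
    {z : ∀ j, degreeLT R (k j)} (h : (injectedShift y ^ m) z = 0) :
    ∃ g : ι → R[X], (fun j => (z j : R[X])) = g ᵥ* oneSubXMul y := by
  induction m generalizing z with
  | zero =>
    obtain rfl : z = 0 := h
    exact ⟨0, by rw [zero_vecMul]; rfl⟩
  | succ m ih =>
    obtain ⟨g, hg⟩ := ih (z := injectedShift y z) (by rwa [← Module.End.mul_apply, ← pow_succ])
    refine ⟨(X : R[X]) • g + fun l => C (constCoeff k l z), ?_⟩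
    rw [add_vecMul, smul_vecMul, ← hg, X_smul_injectedShift, sub_add_cancel]

theorem isUnit_oneSubXMul {y : ι → ∀ j, degreeLT R (k j)} (h : IsNilpotent (injectedShift y)) :
    IsUnit (oneSubXMul y) := by
  obtain ⟨m, hm⟩ := h
  choose g hg using fun l =>
    exists_eq_vecMul_of_pow_apply_eq_zero (y := y) (m := m) (z := y l) (by rw [hm]; rfl)
  have rows_eq : (of fun l j => (y l j : R[X])) = of g * oneSubXMul y :=
    Matrix.ext fun l j => congrFun (hg l) j
  refine IsUnit.of_mul_eq_one_right (1 + (X : R[X]) • of g) ?_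
  rw [add_mul, one_mul, smul_mul_assoc, ← rows_eq, oneSubXMul, sub_add_cancel]

theorem isUnit_oneSubXMul_iff {y : ι → ∀ j, degreeLT R (k j)} :
    IsUnit (oneSubXMul y) ↔ IsNilpotent (injectedShift y) :=
  ⟨isNilpotent_injectedShift, isUnit_oneSubXMul⟩

end StateSpace

theorem card_pi_degreeLT {F ι : Type*} [Field F] [Fintype ι] (k : ι → ℕ) :
    Nat.card (∀ j, degreeLT F (k j)) = Nat.card F ^ ∑ j, k j := by
  have finrank_eq (j : ι) : Module.finrank F (degreeLT F (k j)) = k j :=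
    (degreeLTEquiv F (k j)).finrank_eq.trans (Module.finrank_fin_fun F)
  rw [Module.natCard_eq_pow_finrank (K := F), Module.finrank_pi_fintype]
  simp only [finrank_eq]

theorem ncard_units_setOf {M : Type*} [Monoid M] (p : M → Prop) :
    {u : Mˣ | p u}.ncard = {x | IsUnit x ∧ p x}.ncard := by
  rw [← Set.ncard_image_of_injective _ Units.val_injective]
  congr 1
  ext x
  constructor
  · rintro ⟨u, hu, rfl⟩
    exact ⟨u.isUnit, hu⟩
  · rintro ⟨⟨u, rfl⟩, hu⟩
    exact ⟨u, hu, rfl⟩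

theorem ncard_GL_eq_ncard_isNilpotent_injectedShift {R ι : Type*} [CommRing R] [Fintype ι]
    [DecidableEq ι] (k : ι → ℕ) :
    {A : GL ι R[X] | (∀ i j, ((A : Matrix ι ι R[X]) i j).degree ≤ k j) ∧
        (A : Matrix ι ι R[X]).map (fun p => p.coeff 0) = 1}.ncard =
      {y : ι → ∀ j, degreeLT R (k j) | IsNilpotent (injectedShift y)}.ncard := by
  rw [ncard_units_setOf fun M : Matrix ι ι R[X] =>
    (∀ i j, (M i j).degree ≤ k j) ∧ M.map (fun p => p.coeff 0) = 1,
    ← Set.ncard_image_of_injective _ oneSubXMul_injective]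
  simp only [← isUnit_oneSubXMul_iff, ← mem_range_oneSubXMul_iff (k := k)]
  congr 1
  ext M
  constructor
  · rintro ⟨hM, y, rfl⟩
    exact ⟨y, hM, rfl⟩
  · rintro ⟨y, hy, rfl⟩
    exact ⟨hy, y, rfl⟩

/-- The number of `A ∈ GL_n(F[x])` with `deg a_{i,j} ≤ k_j` for all `i, j`
and constant-term matrix equal to the identity is exactly `q^((n-1)(k₁ + ⋯ + kₙ))`. -/
theorem stmt_3 (F : Type*) [Field F] [Fintype F] (q : ℕ) (hq : Fintype.card F = q)
    (n : ℕ) (k : Fin n → ℕ) :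
    {A : GL (Fin n) F[X] |
        (∀ i j, ((A : Matrix (Fin n) (Fin n) F[X]) i j).degree ≤ (k j : ℕ)) ∧
        (A : Matrix (Fin n) (Fin n) F[X]).map (fun p => p.coeff 0) = 1}.ncard
      = q ^ ((n - 1) * ∑ j, k j) := by
  have : Fintype (∀ j, degreeLT F (k j)) := @Fintype.ofFinite _ (Module.finite_of_finite F)
  have card_state : Fintype.card (∀ j, degreeLT F (k j)) = q ^ ∑ j, k j := by
    rw [← Nat.card_eq_fintype_card, card_pi_degreeLT, Nat.card_eq_fintype_card, hq]
  have count : {y : Fin n → ∀ j, degreeLT F (k j) | IsNilpotent (injectedShift y)}.ncard *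
      q ^ ∑ j, k j = (q ^ ∑ j, k j) ^ n := by
    rw [← card_state]
    exact ncard_isNilpotent_add_sum_smulRight_mul_card (backwardShift k) (constCoeff k)
      maxInvariant_backwardShift
  have card_state_pos : 0 < q ^ ∑ j, k j := pow_pos (hq ▸ Fintype.card_pos) _
  rw [ncard_GL_eq_ncard_isNilpotent_injectedShift]
  refine Nat.eq_of_mul_eq_mul_right card_state_pos (count.trans ?_)
  cases n with
  | zero => simp
  | succ n => rw [Nat.add_sub_cancel, mul_comm n, pow_mul, pow_succ]
end
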